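/- If r ≥ 4, then the map t ↦ e^{P_t(g_t)} is C^k on U, where k = min(N − 1, r − 4). -/

import Mathlib

noncomputable section

open MeasureTheory Complex Filter Set
open scoped Topology ENNReal NNReal BigOperators FourierTransform SchwartzMap

/-! ### `C^N` families of `C^r` functions -/

/-- Bundle a function of a real variable as a bounded continuous function
(junk value `0` if it is not bounded continuous). -/
def toBCF (u : ℝ → ℝ) : BoundedContinuousFunction ℝ ℝ :=
  open scoped Classical in
  if h : Continuous u ∧ ∃ C, ∀ x y, dist (u x) (u y) ≤ C then ⟨⟨u, h.1⟩, h.2⟩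
  else 0

section Family
variable {P : Type*} [NormedAddCommGroup P] [NormedSpace ℝ P]

/-- `t ↦ f t` is a `C^N` map on `U` with values in the space `C^r(ℝ)`
(of bounded `C^r` functions): each value is `C^r` and each derivative of order `≤ r`
depends on the parameter in a `C^N` way, as a bounded continuous function. -/
def CNFamily (N : ℕ) (r : ℕ) (U : Set P) (f : P → ℝ → ℝ) : Prop :=
  (∀ t ∈ U, ContDiff ℝ r (f t)) ∧
  ∀ j : ℕ, j ≤ r → ContDiffOn ℝ N (fun t => toBCF (iteratedDeriv j (f t))) U

/-- `t ↦ F t` is a `C^N` map on `U` with values in `C^r(ℝ)`, where the values may be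
unbounded (e.g. diffeomorphisms of `ℝ`): the value at the base point and all
derivatives of order `1 ≤ j ≤ r` are `C^N` in the parameter. -/
def CNFamilyU (N : ℕ) (r : ℕ) (U : Set P) (F : P → ℝ → ℝ) : Prop :=
  (∀ t ∈ U, ContDiff ℝ r (F t)) ∧
  ContDiffOn ℝ N (fun t => F t 0) U ∧
  ∀ j : ℕ, 1 ≤ j → j ≤ r → ContDiffOn ℝ N (fun t => toBCF (iteratedDeriv j (F t))) U

end Family

/-- `F` is a `C^k` diffeomorphism of `ℝ`. -/
def IsCDiffeo (k : ℕ) (F : ℝ → ℝ) : Prop :=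
  ContDiff ℝ k F ∧ Function.Bijective F ∧ ∀ x, deriv F x ≠ 0

/-! ### The circle, circle maps through their lifts, periodic points, pressure -/

/-- The circle `S¹ = ℝ/ℤ`. -/
abbrev 𝕊 : Type := UnitAddCircle

/-- The canonical representative in `[0,1)` of a point of the circle. -/
def liftRep (y : 𝕊) : ℝ := ((AddCircle.equivIco 1 0) y).1

/-- The self-map of the circle induced by a map `T : ℝ → ℝ` (meant to be applied to
lifts of circle maps, i.e. maps commuting with integer translations). -/
def circleMapC (T : ℝ → ℝ) (y : 𝕊) : 𝕊 := (T (liftRep y) : ℝ) 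

/-- The function on the circle induced by a function `g : ℝ → ℝ` (meant to be applied
to `1`-periodic functions). -/
def circleFun (g : ℝ → ℝ) (y : 𝕊) : ℝ := g (liftRep y)

/-- `T` is the lift of a degree `d` circle map. -/
def IsCircleLift (T : ℝ → ℝ) (d : ℤ) : Prop := ∀ x, T (x + 1) = T x + d

/-- Representatives in `[0,1)` of the fixed points of the `n`-th iterate of the
circle map with lift `T`. -/
def periodicPtsIn (T : ℝ → ℝ) (n : ℕ) : Set ℝ :=
  {x | x ∈ Set.Ico (0:ℝ) 1 ∧ ∃ k : ℤ, T^[n] x = x + k}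

/-- Birkhoff sum `g_{n}(x) = ∑_{i<n} g(T^i x)`. -/
def birkhoff (T g : ℝ → ℝ) (n : ℕ) (x : ℝ) : ℝ :=
  ∑ i ∈ Finset.range n, g (T^[i] x)

/-- `T` is (the lift of) a `C^r` expanding circle map with expansion constant `lam⁻¹`. -/
def IsExpandingLift (lam : ℝ) (r : ℕ) (T : ℝ → ℝ) : Prop :=
  ContDiff ℝ r T ∧ (∃ d : ℤ, IsCircleLift T d) ∧ ∀ x, lam⁻¹ ≤ |deriv T x|

/-- The topological pressure `P(T, g)` of the potential `g` for an expanding circle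
map (with lift) `T`, computed through weighted periodic orbits. -/
def pressureExp (T g : ℝ → ℝ) : ℝ :=
  limsup (fun n : ℕ =>
    Real.log (∑ᶠ x ∈ periodicPtsIn T n, Real.exp (birkhoff T g n x)) / n) atTop

section CFam
variable {P : Type*} [NormedAddCommGroup P] [NormedSpace ℝ P]

/-- `t ↦ T t` is a `C^N` family on `U`, with values in the `C^r` expanding maps of the
circle with expansion constant `lam⁻¹` (described through their lifts). -/
def ExpandingFamily (N r : ℕ) (lam : ℝ) (U : Set P) (T : P → ℝ → ℝ) : Prop :=
  (∀ t ∈ U, IsExpandingLift lam r (T t)) ∧ CNFamilyU N r U T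

/-- `t ↦ g t` is a `C^N` family on `U` of `C^r` functions on the circle
(described through their `1`-periodic lifts). -/
def PotentialFamily (N r : ℕ) (U : Set P) (G : P → ℝ → ℝ) : Prop :=
  (∀ t ∈ U, ContDiff ℝ r (G t) ∧ ∀ x, G t (x + 1) = G t x) ∧ CNFamily N r U G

end CFam


/-! ### Interpolation of derivatives and limits of sequences of functions -/

lemma interp_one {E F : Type*} [NormedAddCommGroup E] [NormedSpace ℝ E] [NormedAddCommGroup F]
    [NormedSpace ℝ F] (g : E → F) (hg : Differentiable ℝ g) (a M : ℝ) (hM0 : 0 ≤ M)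
    (ha : ∀ x, ‖g x‖ ≤ a) (hM : ∀ x y, ‖fderiv ℝ g x - fderiv ℝ g y‖ ≤ M * ‖x - y‖)
    (h : ℝ) (hh : 0 < h) (x : E) : ‖fderiv ℝ g x‖ ≤ 2 * a / h + M * h := by
  have ha0 : 0 ≤ a := (norm_nonneg _).trans (ha x)
  refine ContinuousLinearMap.opNorm_le_of_unit_norm (by positivity) fun v hv => ?_
  have key : ‖g (x + h • v) - g x - fderiv ℝ g x (h • v)‖ ≤ M * h * ‖h • v‖ := by
    have := Convex.norm_image_sub_le_of_norm_fderiv_le' (𝕜 := ℝ) (f := g)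
      (φ := fderiv ℝ g x) (C := M * h) (s := Metric.closedBall x h) (x := x) (y := x + h • v)
      (fun z _ => hg z) (fun z hz => ?_) (convex_closedBall x h)
      (Metric.mem_closedBall_self hh.le) ?_
    · simpa using this
    · refine (hM z x).trans ?_
      gcongr
      rwa [mem_closedBall_iff_norm] at hz
    · rw [mem_closedBall_iff_norm]
      simp [norm_smul, hv, abs_of_pos hh]
  have e1 : ‖h • v‖ = h := by simp [norm_smul, hv, abs_of_pos hh]
  rw [e1] at key
  have e2 : h * ‖fderiv ℝ g x v‖ = ‖fderiv ℝ g x (h • v)‖ := by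
    rw [map_smul, norm_smul, Real.norm_of_nonneg hh.le]
  have e3 : ‖fderiv ℝ g x (h • v)‖ ≤ 2 * a + M * h * h := by
    have : fderiv ℝ g x (h • v) = g (x + h • v) - g x
        - (g (x + h • v) - g x - fderiv ℝ g x (h • v)) := by abel
    rw [this]
    refine (norm_sub_le _ _).trans ?_
    have := norm_sub_le (g (x + h • v)) (g x)
    linarith [ha (x + h • v), ha x]
  rw [← e2] at e3
  have : ‖fderiv ℝ g x v‖ ≤ (2 * a + M * h * h) / h := by
    rw [le_div_iff₀ hh]; linarith
  refine this.trans (le_of_eq ?_)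
  field_simp

lemma interp_iter {E : Type*} [NormedAddCommGroup E] [NormedSpace ℝ E] (K : ℕ)
    (f : ℕ → E → ℝ) (hf : ∀ n, ContDiff ℝ K (f n))
    (C : ℝ) (p : ℕ) (hC : ∀ j ≤ K, ∀ n x, ‖iteratedFDeriv ℝ j (f n) x‖ ≤ C * (n + 1 : ℝ) ^ p)
    (h0 : ∀ q : ℕ, ∃ A : ℝ, ∀ n x, ‖f n x‖ ≤ A / (n + 1 : ℝ) ^ q) :
    ∀ j : ℕ, j ≤ K - 1 → ∀ q : ℕ, ∃ A : ℝ, ∀ n x, ‖iteratedFDeriv ℝ j (f n) x‖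
      ≤ A / (n + 1 : ℝ) ^ q := by
  intro j
  induction j with
  | zero => intro _ q; simpa using h0 q
  | succ j ih =>
    intro hj q
    obtain ⟨A, hA⟩ := ih (by omega) (2 * q + p)
    refine ⟨2 * A + C, fun n x => ?_⟩
    have hn : (0 : ℝ) < n + 1 := by positivity
    have hd : Differentiable ℝ (iteratedFDeriv ℝ j (f n)) :=
      (hf n).differentiable_iteratedFDeriv (by exact_mod_cast (by omega : j < K))
    have hd2 : Differentiable ℝ (iteratedFDeriv ℝ (j + 1) (f n)) :=
      (hf n).differentiable_iteratedFDeriv (by exact_mod_cast (by omega : j + 1 < K))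
    have hL : ∀ x y, ‖fderiv ℝ (iteratedFDeriv ℝ j (f n)) x
        - fderiv ℝ (iteratedFDeriv ℝ j (f n)) y‖ ≤ C * (n + 1 : ℝ) ^ p * ‖x - y‖ := by
      intro x y
      have h1 : ‖iteratedFDeriv ℝ (j + 1) (f n) x - iteratedFDeriv ℝ (j + 1) (f n) y‖
          ≤ C * (n + 1 : ℝ) ^ p * ‖x - y‖ := by
        refine Convex.norm_image_sub_le_of_norm_fderiv_le (𝕜 := ℝ) (s := univ)
          (fun z _ => hd2 z) (fun z _ => ?_) convex_univ (mem_univ _) (mem_univ _)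
        rw [norm_fderiv_iteratedFDeriv]
        exact hC _ (by omega) n z
      rw [iteratedFDeriv_succ_eq_comp_left] at h1
      simp only [Function.comp_apply] at h1
      rw [← dist_eq_norm, LinearIsometryEquiv.dist_map, dist_eq_norm] at h1
      exact h1
    have := interp_one (iteratedFDeriv ℝ j (f n)) hd (A / (n + 1 : ℝ) ^ (2 * q + p))
      (C * (n + 1 : ℝ) ^ p) ((norm_nonneg _).trans (hC 0 (Nat.zero_le _) n 0)) (hA n) hL (((n : ℝ) + 1) ^ (q + p))⁻¹ (by positivity) x
    rw [norm_fderiv_iteratedFDeriv] at this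
    refine this.trans (le_of_eq ?_)
    field_simp
    ring

/-- If the differences of a sequence of functions decay rapidly while their derivatives
up to order `K` grow polynomially, then the limit is `C^{K-1}`. -/
lemma contDiff_of_rapid {E : Type*} [NormedAddCommGroup E] [NormedSpace ℝ E] (K : ℕ)
    (f : ℕ → E → ℝ) (hf : ∀ n, ContDiff ℝ K (f n))
    (C : ℝ) (p : ℕ) (hC : ∀ j ≤ K, ∀ n x, ‖iteratedFDeriv ℝ j (f n) x‖ ≤ C * (n + 1 : ℝ) ^ p)
    (h0 : ∀ q : ℕ, ∃ A : ℝ, ∀ n x, ‖f (n + 1) x - f n x‖ ≤ A / (n + 1 : ℝ) ^ q)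
    (F : E → ℝ) (hF : ∀ x, Tendsto (fun n => f n x) atTop (𝓝 (F x))) :
    ContDiff ℝ (K - 1 : ℕ) F := by
  have hC0 : 0 ≤ C := by
    have := hC 0 (Nat.zero_le _) 0 0
    have := (norm_nonneg _).trans this
    simpa using this
  set g : ℕ → E → ℝ := fun n x => f (n + 1) x - f n x with hg
  have hgc : ∀ n, ContDiff ℝ K (g n) := fun n => (hf (n + 1)).sub (hf n)
  have hgb : ∀ j ≤ K, ∀ n x, ‖iteratedFDeriv ℝ j (g n) x‖ ≤ (C * 2 ^ p + C) * (n + 1 : ℝ) ^ p := by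
    intro j hj n x
    have e : iteratedFDeriv ℝ j (g n) x
        = iteratedFDeriv ℝ j (f (n + 1)) x - iteratedFDeriv ℝ j (f n) x := by
      have := iteratedFDeriv_sub_apply (𝕜 := ℝ) (i := j) (x := x)
        (((hf (n+1)).of_le (by exact_mod_cast hj)).contDiffAt)
        (((hf n).of_le (by exact_mod_cast hj)).contDiffAt)
      exact this
    rw [e]
    refine (norm_sub_le _ _).trans ?_
    have h1 := hC j hj (n + 1) x
    have h2 := hC j hj n x
    have h3 : (((n + 1 : ℕ) : ℝ) + 1) ^ p ≤ 2 ^ p * (n + 1 : ℝ) ^ p := by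
      rw [← mul_pow]; gcongr; push_cast; linarith [(Nat.cast_nonneg n : (0:ℝ) ≤ n)]
    nlinarith [mul_le_mul_of_nonneg_left h3 hC0]
  have key := interp_iter K g hgc _ p hgb h0
  choose! A hA using fun j (hj : j ≤ K - 1) => key j hj 2
  have hsum : ∀ c : ℝ, Summable (fun n : ℕ => c / ((n : ℝ) + 1) ^ 2) := by
    intro c
    have := (summable_nat_add_iff 1).2 (Real.summable_one_div_nat_pow.2 (by norm_num : 1 < 2))
    convert! this.mul_left c using 2
    push_cast; ring
  have hts : ContDiff ℝ ((K - 1 : ℕ) : ℕ∞) (fun x => ∑' n, g n x) := by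
    refine contDiff_tsum (v := fun j (n : ℕ) => A j / ((n : ℝ) + 1) ^ 2)
      (fun n => (hgc n).of_le (by exact_mod_cast (by omega))) (fun j _ => hsum _) ?_
    intro j n x hj
    exact hA j (by exact_mod_cast hj) n x
  have hFe : F = fun x => f 0 x + ∑' n, g n x := by
    funext x
    obtain ⟨B, hB⟩ := h0 2
    have hs : Summable (fun n => g n x) :=
      Summable.of_norm_bounded (hsum B) (fun n => hB n x)
    have h1 := hs.hasSum.tendsto_sum_nat
    have h2 : ∀ n, ∑ i ∈ Finset.range n, g i x = f n x - f 0 x := by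
      intro n
      exact Finset.sum_range_sub (fun n => f n x) n
    simp only [h2] at h1
    have h3 := (hF x).sub_const (f 0 x)
    have := tendsto_nhds_unique h1 h3
    linarith
  rw [hFe]
  exact ((hf 0).of_le (by exact_mod_cast (by omega))).add (by exact_mod_cast hts)

/-! ### Derivatives of log-sum-exp functions -/

lemma norm_iteratedFDeriv_exp (i : ℕ) (x : ℝ) : ‖iteratedFDeriv ℝ i Real.exp x‖ = Real.exp x := by
  rw [norm_iteratedFDeriv_eq_norm_iteratedDeriv, iteratedDeriv_eq_iterate, Real.iter_deriv_exp]
  simp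

lemma iteratedFDeriv_sum_exp {E : Type*} [NormedAddCommGroup E] [NormedSpace ℝ E] (K : ℕ)
    (J : Type) [Fintype J] (A : J → E → ℝ) (M : ℝ) (hM : 1 ≤ M)
    (hA : ∀ j, ContDiff ℝ K (A j)) (x : E)
    (hb : ∀ j l, 1 ≤ l → l ≤ K → ‖iteratedFDeriv ℝ l (A j) x‖ ≤ M) (l : ℕ) (hl : l ≤ K) :
    ‖iteratedFDeriv ℝ l (fun t => ∑ j, Real.exp (A j t)) x‖ ≤
      (l.factorial : ℝ) * (∑ j, Real.exp (A j x)) * M ^ l := by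
  have hlK : (l : WithTop ℕ∞) ≤ (K : WithTop ℕ∞) := by exact_mod_cast hl
  have e : iteratedFDeriv ℝ l (fun t => ∑ j, Real.exp (A j t)) x
      = ∑ j, iteratedFDeriv ℝ l (Real.exp ∘ A j) x := by
    have := iteratedFDeriv_sum_apply (𝕜 := ℝ) (f := fun j t => Real.exp (A j t))
      (u := Finset.univ) (n := l) (x := x)
      (fun j _ => ((Real.contDiff_exp.comp (hA j)).of_le hlK).contDiffAt)
    rw [show (∑ j, fun t => Real.exp (A j t)) = fun t => ∑ j, Real.exp (A j t) by
      funext t; simp] at this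
    exact this
  rw [e]
  refine (norm_sum_le _ _).trans ?_
  rw [Finset.mul_sum, Finset.sum_mul]
  refine Finset.sum_le_sum fun j _ => ?_
  refine norm_iteratedFDeriv_comp_le (N := K) Real.contDiff_exp (hA j) hlK x
    (fun i _ => (norm_iteratedFDeriv_exp i _).le) (fun i hi1 hil => ?_)
  exact (hb j i hi1 (hil.trans hl)).trans (le_self_pow₀ hM (by omega))

lemma logSumExp_bound {E : Type*} [NormedAddCommGroup E] [NormedSpace ℝ E] (K : ℕ) :
    ∃ C : ℝ, 0 ≤ C ∧ ∀ (J : Type) [Fintype J] [Nonempty J] (A : J → E → ℝ) (M : ℝ), 1 ≤ M →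
    (∀ j, ContDiff ℝ K (A j)) → ∀ x : E,
    (∀ j l, 1 ≤ l → l ≤ K → ‖iteratedFDeriv ℝ l (A j) x‖ ≤ M) →
    ∀ l, 1 ≤ l → l ≤ K →
      ‖iteratedFDeriv ℝ l (fun t => Real.log (∑ j, Real.exp (A j t))) x‖ ≤ C * M ^ K := by
  set C1 : ℝ := ∑ i ∈ Finset.range (K + 1), ‖iteratedFDerivWithin ℝ i Real.log (Ioi 0) 1‖ with hC1
  have hC10 : 0 ≤ C1 := Finset.sum_nonneg fun _ _ => norm_nonneg _
  refine ⟨(K.factorial : ℝ) * C1 * (K.factorial : ℝ) ^ K, by positivity, ?_⟩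
  intro J _ _ A M hM hA x hb l hl1 hl
  have hlK : (l : WithTop ℕ∞) ≤ (K : WithTop ℕ∞) := by exact_mod_cast hl
  set Q : E → ℝ := fun t => ∑ j, Real.exp (A j t) with hQ
  have hQpos : ∀ t, 0 < Q t := fun t =>
    Finset.sum_pos (fun j _ => Real.exp_pos _) Finset.univ_nonempty
  have hQc : ContDiff ℝ K Q := ContDiff.sum fun j _ => Real.contDiff_exp.comp (hA j)
  set W : E → ℝ := fun t => (Q x)⁻¹ • Q t with hW
  have hWc : ContDiff ℝ K W := hQc.const_smul _
  have hWpos : ∀ t, 0 < W t := fun t => by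
    have := hQpos x; have := hQpos t; simp only [hW, smul_eq_mul]; positivity
  have hlogc : ContDiffOn ℝ K Real.log (Ioi 0) := fun y hy =>
    (Real.contDiffAt_log.2 (ne_of_gt hy)).contDiffWithinAt
  have e : (fun t => Real.log (Q t)) = fun t => (Real.log ∘ W) t + Real.log (Q x) := by
    funext t
    have h1 := hQpos x; have h2 := hQpos t
    simp only [hW, smul_eq_mul, Function.comp_apply]
    rw [Real.log_mul (by positivity) (by positivity), Real.log_inv]; ring
  have hlW : ContDiff ℝ K (Real.log ∘ W) := hlogc.comp_contDiff hWc (fun t => hWpos t)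
  have e2 : iteratedFDeriv ℝ l (fun t => Real.log (Q t)) x
      = iteratedFDeriv ℝ l (Real.log ∘ W) x := by
    rw [e]
    have := iteratedFDeriv_add_apply (𝕜 := ℝ) (i := l) (x := x) (f := Real.log ∘ W)
      (g := fun _ => Real.log (Q x)) ((hlW.of_le hlK).contDiffAt) contDiffAt_const
    rw [iteratedFDeriv_const_of_ne (by omega)] at this
    simpa using! this
  rw [e2]
  have hf1 : (1 : ℝ) ≤ K.factorial := by exact_mod_cast K.factorial_pos
  have main := norm_iteratedFDeriv_comp_le' (𝕜 := ℝ) (g := Real.log) (f := W) (n := l) (N := K)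
    (t := Ioi 0) (by rintro _ ⟨t, rfl⟩; exact hWpos t) (uniqueDiffOn_Ioi 0) hlogc hWc hlK x
    (C := C1) (D := K.factorial * M) (fun i hi => ?_) (fun i hi1 hil => ?_)
  · refine main.trans ?_
    rw [mul_pow, ← mul_assoc]
    gcongr
  · have : W x = 1 := by simp [hW, (hQpos x).ne']
    rw [this]
    exact Finset.single_le_sum (f := fun i => ‖iteratedFDerivWithin ℝ i Real.log (Ioi 0) 1‖)
      (fun _ _ => norm_nonneg _) (Finset.mem_range.2 (by omega))
  · have hiK : (i : WithTop ℕ∞) ≤ (K : WithTop ℕ∞) := by exact_mod_cast (hil.trans hl)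
    have h1 := iteratedFDeriv_sum_exp K J A M hM hA x hb i (hil.trans hl)
    have h2 : iteratedFDeriv ℝ i W x = (Q x)⁻¹ • iteratedFDeriv ℝ i Q x :=
      iteratedFDeriv_const_smul_apply (a := (Q x)⁻¹) (f := Q) ((hQc.of_le hiK).contDiffAt)
    rw [h2, norm_smul, norm_inv, Real.norm_of_nonneg (hQpos x).le]
    have h3 : (Q x)⁻¹ * ‖iteratedFDeriv ℝ i Q x‖ ≤ i.factorial * M ^ i := by
      rw [inv_mul_le_iff₀ (hQpos x)]
      refine h1.trans (le_of_eq ?_); ring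
    refine h3.trans ?_
    rw [mul_pow]
    gcongr
    calc (i.factorial : ℝ) ≤ K.factorial := by exact_mod_cast Nat.factorial_le (hil.trans hl)
      _ ≤ _ := le_self_pow₀ hf1 (by omega)

/-! ### Iterated function systems depending on a parameter -/

/-- Admissible parametrized iterated function systems with weights. -/
structure IFSFam {E : Type*} [NormedAddCommGroup E] [NormedSpace ℝ E] {ι : Type}
    (K : ℕ) (R lam L C : ℝ) (ψ φ : ι → E × ℝ → ℝ) : Prop where
  hR : 0 < R
  hlam0 : 0 ≤ lam
  hlam1 : lam < 1
  hL : 0 ≤ L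
  hC : 0 ≤ C
  hψ : ∀ i, ContDiff ℝ K (ψ i)
  hφ : ∀ i, ContDiff ℝ K (φ i)
  maps : ∀ i t y, |y| ≤ R → |ψ i (t, y)| ≤ R
  lipψ : ∀ i t y y', |ψ i (t, y) - ψ i (t, y')| ≤ lam * |y - y'|
  lipφ : ∀ i t y y', |φ i (t, y) - φ i (t, y')| ≤ L * |y - y'|
  bψ : ∀ i l, l ≤ K → ∀ t y, |y| ≤ R → ‖iteratedFDeriv ℝ l (ψ i) (t, y)‖ ≤ C
  bφ : ∀ i l, l ≤ K → ∀ t y, |y| ≤ R → ‖iteratedFDeriv ℝ l (φ i) (t, y)‖ ≤ C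

/-- Iterates of the transfer operator on the constant function `1`. -/
def ifsU {E : Type*} {ι : Type} [Fintype ι] (ψ φ : ι → E × ℝ → ℝ) : ℕ → E → ℝ → ℝ
  | 0 => fun _ _ => 1
  | n + 1 => fun t y => ∑ i, Real.exp (φ i (t, y)) * ifsU ψ φ n t (ψ i (t, y))

/-- A class of curves with bounded derivatives. -/
def Cur {E : Type*} [NormedAddCommGroup E] [NormedSpace ℝ E] (K m : ℕ) (R : ℝ) (c : ℕ → ℝ)
    (z : E → ℝ) : Prop :=
  ContDiff ℝ K z ∧ (∀ t, |z t| ≤ R) ∧ ∀ l, 1 ≤ l → l ≤ m → ∀ t, ‖iteratedFDeriv ℝ l z t‖ ≤ c l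

section
variable {E : Type*} [NormedAddCommGroup E] [NormedSpace ℝ E]

lemma norm_iteratedFDeriv_id_le (l : ℕ) (hl : 1 ≤ l) (t : E) :
    ‖iteratedFDeriv ℝ l (fun s : E => s) t‖ ≤ 1 := by
  obtain ⟨l, rfl⟩ : ∃ k, l = k + 1 := ⟨l - 1, by omega⟩
  rw [← norm_iteratedFDeriv_fderiv]
  have : fderiv ℝ (fun s : E => s) = fun _ => ContinuousLinearMap.id ℝ E := by
    funext s; exact fderiv_fun_id
  rw [this]
  rcases Nat.eq_zero_or_pos l with rfl | h
  · rw [norm_iteratedFDeriv_zero]; exact ContinuousLinearMap.norm_id_le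
  · rw [iteratedFDeriv_const_of_ne (by omega)]; simp

lemma Cur.graph_bound {K m : ℕ} {R : ℝ} {c : ℕ → ℝ} (hc : ∀ l, 0 ≤ c l) {z : E → ℝ}
    (hz : Cur K m R c z) (hm : m ≤ K) (l : ℕ) (hl1 : 1 ≤ l) (hl : l ≤ m) (t : E) :
    ‖iteratedFDeriv ℝ l (fun s : E => (s, z s)) t‖ ≤
      (1 + ∑ i ∈ Finset.range (m + 1), c i) ^ l := by
  have hlK : (l : WithTop ℕ∞) ≤ (K : WithTop ℕ∞) := by exact_mod_cast (hl.trans hm)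
  have hs : 0 ≤ ∑ i ∈ Finset.range (m + 1), c i := Finset.sum_nonneg fun i _ => hc i
  have hcl : c l ≤ ∑ i ∈ Finset.range (m + 1), c i :=
    Finset.single_le_sum (fun i _ => hc i) (Finset.mem_range.2 (by omega))
  refine le_trans ?_ (le_self_pow₀ (by linarith) (by omega))
  rw [iteratedFDeriv_prodMk (n := K) (f := fun s : E => s) contDiff_fun_id.contDiffAt
    hz.1.contDiffAt hlK]
  rw [ContinuousMultilinearMap.opNorm_prod]
  refine max_le ?_ ?_
  · exact (norm_iteratedFDeriv_id_le l hl1 t).trans (by linarith)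
  · exact (hz.2.2 l hl1 hl t).trans (by linarith)

lemma Cur.comp_bound {F : Type*} [NormedAddCommGroup F] [NormedSpace ℝ F]
    {K m : ℕ} {R : ℝ} {c : ℕ → ℝ} (hc : ∀ l, 0 ≤ c l) {z : E → ℝ}
    (hz : Cur K m R c z) (hm : m ≤ K) (f : E × ℝ → F) (hf : ContDiff ℝ m f) (B : ℝ) (hB0 : 0 ≤ B)
    (hB : ∀ l, l ≤ m → ∀ t y, |y| ≤ R → ‖iteratedFDeriv ℝ l f (t, y)‖ ≤ B)
    (l : ℕ) (hl : l ≤ m) (t : E) :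
    ‖iteratedFDeriv ℝ l (fun s : E => f (s, z s)) t‖ ≤
      m.factorial * B * (1 + ∑ i ∈ Finset.range (m + 1), c i) ^ m := by
  have hlm : (l : WithTop ℕ∞) ≤ (m : WithTop ℕ∞) := by exact_mod_cast hl
  have hmK : (m : WithTop ℕ∞) ≤ (K : WithTop ℕ∞) := by exact_mod_cast hm
  have hs : 0 ≤ ∑ i ∈ Finset.range (m + 1), c i := Finset.sum_nonneg fun i _ => hc i
  have h := norm_iteratedFDeriv_comp_le (𝕜 := ℝ) (g := f) (f := fun s : E => (s, z s)) (n := l)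
    (N := m) hf (contDiff_id.prodMk (hz.1.of_le hmK)) hlm t (C := B)
    (D := 1 + ∑ i ∈ Finset.range (m + 1), c i) (fun i hi => hB i (hi.trans hl) _ _ (hz.2.1 t))
    (fun i hi1 hi => hz.graph_bound hc hm i hi1 (hi.trans hl) t)
  refine h.trans ?_
  gcongr
  linarith

lemma IFSFam.bound_fderiv {ι : Type} {K : ℕ} {R lam L C : ℝ} {ψ φ : ι → E × ℝ → ℝ}
    (H : IFSFam K R lam L C ψ φ) {F : Type*} [NormedAddCommGroup F] [NormedSpace ℝ F]
    (Λ : (E × ℝ →L[ℝ] ℝ) →L[ℝ] F) (i : ι) {m : ℕ} (hm : m + 1 ≤ K) :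
    ∀ l, l ≤ m → ∀ t y, |y| ≤ R →
    ‖iteratedFDeriv ℝ l (Λ ∘ fderiv ℝ (ψ i)) (t, y)‖ ≤ ‖Λ‖ * C := by
  intro l hl t y hy
  have hm1K : (m : WithTop ℕ∞) + 1 ≤ (K : WithTop ℕ∞) := by exact_mod_cast hm
  have hfc : ContDiff ℝ m (fderiv ℝ (ψ i)) := (H.hψ i).fderiv_right hm1K
  refine (Λ.norm_iteratedFDeriv_comp_left (N := m) hfc.contDiffAt
    (by exact_mod_cast hl)).trans ?_
  rw [norm_iteratedFDeriv_fderiv]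
  gcongr
  exact H.bψ i (l + 1) (by omega) t y hy

lemma exists_cur {ι : Type} {K : ℕ} {R lam L C : ℝ} {ψ φ : ι → E × ℝ → ℝ}
    (H : IFSFam K R lam L C ψ φ) : ∀ m, m ≤ K → ∃ c : ℕ → ℝ, (∀ l, 0 ≤ c l) ∧
      ∀ z : E → ℝ, Cur K m R c z → ∀ i, Cur K m R c (fun t => ψ i (t, z t)) := by
  intro m
  induction m with
  | zero =>
    intro _
    refine ⟨fun _ => 0, fun _ => le_rfl, fun z hz i => ⟨?_, fun t => H.maps i t _ (hz.2.1 t), ?_⟩⟩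
    · exact (H.hψ i).comp (contDiff_id.prodMk hz.1)
    · intro l h1 h2; omega
  | succ m ih =>
    intro hm
    obtain ⟨c, hc, hinv⟩ := ih (by omega)
    have hmK : (m : WithTop ℕ∞) ≤ (K : WithTop ℕ∞) := by exact_mod_cast (by omega : m ≤ K)
    have hm1K : (m : WithTop ℕ∞) + 1 ≤ (K : WithTop ℕ∞) := by exact_mod_cast hm
    set L1 : (E × ℝ →L[ℝ] ℝ) →L[ℝ] (E →L[ℝ] ℝ) :=
      (ContinuousLinearMap.compL ℝ E (E × ℝ) ℝ).flip (ContinuousLinearMap.inl ℝ E ℝ) with hL1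
    set L2 : (E × ℝ →L[ℝ] ℝ) →L[ℝ] ℝ := ContinuousLinearMap.apply ℝ ℝ ((0, 1) : E × ℝ) with hL2
    set D := 1 + ∑ i ∈ Finset.range (m + 1), c i with hD
    have hD0 : 0 ≤ D := by
      have : 0 ≤ ∑ i ∈ Finset.range (m + 1), c i := Finset.sum_nonneg fun i _ => hc i
      linarith
    set B1 := m.factorial * (‖L1‖ * C) * D ^ m with hB1
    set B2 := m.factorial * (‖L2‖ * C) * D ^ m with hB2
    have hC := H.hC
    set S := ∑ i ∈ Finset.range m, (m.choose (i + 1) : ℝ) * B2 * c (m - i) with hS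
    have hS0 : 0 ≤ S := Finset.sum_nonneg fun i _ => by
      have := hc (m - i); positivity
    have h1l : 0 < 1 - lam := by linarith [H.hlam1]
    set v := (B1 + S) / (1 - lam) with hv
    have hv0 : 0 ≤ v := by positivity
    refine ⟨Function.update c (m + 1) v, ?_, ?_⟩
    · intro l
      by_cases h : l = m + 1
      · subst h; simpa using hv0
      · simpa [Function.update_of_ne h] using hc l
    · intro z hz i
      have hzm : Cur K m R c z := ⟨hz.1, hz.2.1, fun l h1 h2 t => by
        have := hz.2.2 l h1 (by omega) t
        rwa [Function.update_of_ne (by omega)] at this⟩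
      have hzn : ∀ t, ‖iteratedFDeriv ℝ (m + 1) z t‖ ≤ v := fun t => by
        simpa using hz.2.2 (m + 1) (by omega) le_rfl t
      obtain ⟨hi1, hi2, hi3⟩ := hinv z hzm i
      refine ⟨hi1, hi2, fun l h1 h2 t => ?_⟩
      by_cases hl : l ≤ m
      · rw [Function.update_of_ne (by omega)]; exact hi3 l h1 hl t
      obtain rfl : l = m + 1 := by omega
      rw [Function.update_self, ← norm_iteratedFDeriv_fderiv]
      have hψd : Differentiable ℝ (ψ i) := (H.hψ i).differentiable (by
        have : K ≠ 0 := by omega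
        exact_mod_cast this)
      have hzd : Differentiable ℝ z := hz.1.differentiable (by
        have : K ≠ 0 := by omega
        exact_mod_cast this)
      have hfc : ContDiff ℝ m (fderiv ℝ (ψ i)) := (H.hψ i).fderiv_right hm1K
      have hzc : ContDiff ℝ m (fderiv ℝ z) := hz.1.fderiv_right hm1K
      have hgc : ContDiff ℝ m (fun s : E => (s, z s)) := contDiff_id.prodMk (hz.1.of_le hmK)
      have e : fderiv ℝ (fun t => ψ i (t, z t)) = fun t =>
          (L1 ∘ fderiv ℝ (ψ i)) (t, z t) + (L2 ∘ fderiv ℝ (ψ i)) (t, z t) • fderiv ℝ z t := by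
        funext t
        have h1 : HasFDerivAt (fun s : E => (s, z s))
            ((ContinuousLinearMap.id ℝ E).prod (fderiv ℝ z t)) t :=
          (hasFDerivAt_id t).prodMk (hzd t).hasFDerivAt
        have h2 := (hψd (t, z t)).hasFDerivAt.comp t h1
        rw [show (fun t => ψ i (t, z t)) = ψ i ∘ (fun s : E => (s, z s)) from rfl, h2.fderiv]
        ext w
        simp only [hL1, hL2, Function.comp_apply, ContinuousLinearMap.comp_apply,
          add_apply, smul_apply,
          ContinuousLinearMap.flip_apply, ContinuousLinearMap.compL_apply,
          ContinuousLinearMap.apply_apply, ContinuousLinearMap.prod_apply,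
          ContinuousLinearMap.inl_apply, ContinuousLinearMap.id_apply, smul_eq_mul]
        have : ((w, fderiv ℝ z t w) : E × ℝ) = (w, 0) + (fderiv ℝ z t w) • ((0, 1) : E × ℝ) := by
          simp
        rw [this, map_add, map_smul, smul_eq_mul]; ring
      have ha := hzm.comp_bound hc (by omega) (L1 ∘ fderiv ℝ (ψ i)) (L1.contDiff.comp hfc)
        (‖L1‖ * C) (by positivity) (H.bound_fderiv L1 i hm)
      have hb := hzm.comp_bound hc (by omega) (L2 ∘ fderiv ℝ (ψ i)) (L2.contDiff.comp hfc)
        (‖L2‖ * C) (by positivity) (H.bound_fderiv L2 i hm)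
      have hβ : ∀ t, ‖(L2 ∘ fderiv ℝ (ψ i)) (t, z t)‖ ≤ lam := by
        intro t
        have h1 : HasFDerivAt (fun y : ℝ => ((t, y) : E × ℝ))
            (ContinuousLinearMap.inr ℝ E ℝ) (z t) := hasFDerivAt_prodMk_right t (z t)
        have h2 := ((hψd (t, z t)).hasFDerivAt.comp (z t) h1)
        have h3 := h2.le_of_lip' H.hlam0 (Eventually.of_forall fun y => H.lipψ i t y (z t))
        have h4 := ContinuousLinearMap.le_opNorm
          ((fderiv ℝ (ψ i) (t, z t)).comp (ContinuousLinearMap.inr ℝ E ℝ)) 1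
        have h5 : (L2 ∘ fderiv ℝ (ψ i)) (t, z t) =
          ((fderiv ℝ (ψ i) (t, z t)).comp (ContinuousLinearMap.inr ℝ E ℝ)) 1 := by
          simp [hL2]
        rw [h5]
        refine h4.trans ?_
        simpa using h3
      have hac : ContDiff ℝ m (fun t => (L1 ∘ fderiv ℝ (ψ i)) (t, z t)) :=
        (L1.contDiff.comp hfc).comp hgc
      have hbc : ContDiff ℝ m (fun t => (L2 ∘ fderiv ℝ (ψ i)) (t, z t)) :=
        (L2.contDiff.comp hfc).comp hgc
      rw [e]
      have e2 := iteratedFDeriv_add_apply (𝕜 := ℝ) (i := m) (x := t) hac.contDiffAt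
        (hbc.smul hzc).contDiffAt
      have e3 : ‖iteratedFDeriv ℝ m (fun t => (L1 ∘ fderiv ℝ (ψ i)) (t, z t)
          + (L2 ∘ fderiv ℝ (ψ i)) (t, z t) • fderiv ℝ z t) t‖ ≤
          ‖iteratedFDeriv ℝ m (fun t => (L1 ∘ fderiv ℝ (ψ i)) (t, z t)) t‖ +
          ‖iteratedFDeriv ℝ m (fun t => (L2 ∘ fderiv ℝ (ψ i)) (t, z t) • fderiv ℝ z t) t‖ := by
        refine le_trans (le_of_eq ?_) (norm_add_le _ _)
        exact congrArg norm e2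
      refine e3.trans ?_
      have e4 := norm_iteratedFDeriv_smul_le (𝕜 := ℝ) (n := m) hbc hzc t le_rfl
      rw [Finset.sum_range_succ'] at e4
      have e5 : ∑ k ∈ Finset.range m, (m.choose (k + 1) : ℝ) *
          ‖iteratedFDeriv ℝ (k + 1) (fun t => (L2 ∘ fderiv ℝ (ψ i)) (t, z t)) t‖ *
          ‖iteratedFDeriv ℝ (m - (k + 1)) (fderiv ℝ z) t‖ ≤ S := by
        refine Finset.sum_le_sum fun k hk => ?_
        have hk := Finset.mem_range.1 hk
        gcongr
        · exact hb (k + 1) (by omega) t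
        · rw [norm_iteratedFDeriv_fderiv, show m - (k + 1) + 1 = m - k by omega]
          exact hzm.2.2 (m - k) (by omega) (by omega) t
      have e6 : (m.choose 0 : ℝ) *
          ‖iteratedFDeriv ℝ 0 (fun t => (L2 ∘ fderiv ℝ (ψ i)) (t, z t)) t‖ *
          ‖iteratedFDeriv ℝ (m - 0) (fderiv ℝ z) t‖ ≤ lam * v := by
        rw [norm_iteratedFDeriv_zero, Nat.sub_zero, norm_iteratedFDeriv_fderiv]
        simp only [Nat.choose_zero_right, Nat.cast_one, one_mul]
        have := hzn t
        have := hβ t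
        have := H.hlam0
        gcongr
      have e7 := ha m le_rfl t
      have e8 : B1 + S + lam * v = v := by
        rw [hv]; field_simp; ring
      linarith

lemma exists_A {ι : Type} [Fintype ι] [Nonempty ι] {K : ℕ} {R lam L C : ℝ} {ψ φ : ι → E × ℝ → ℝ}
    (H : IFSFam K R lam L C ψ φ) {c : ℕ → ℝ} (hc : ∀ l, 0 ≤ c l)
    (hinv : ∀ z : E → ℝ, Cur K K R c z → ∀ i, Cur K K R c (fun t => ψ i (t, z t))) (M : ℝ)
    (hM : M = K.factorial * C * (1 + ∑ i ∈ Finset.range (K + 1), c i) ^ K) :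
    ∀ (n : ℕ) (z : E → ℝ), Cur K K R c z → ∃ (J : Type) (_ : Fintype J) (_ : Nonempty J)
      (A : J → E → ℝ), (∀ j, ContDiff ℝ K (A j)) ∧
      (∀ j l, l ≤ K → ∀ t, ‖iteratedFDeriv ℝ l (A j) t‖ ≤ n * M) ∧
      ∀ t, ifsU ψ φ n t (z t) = ∑ j, Real.exp (A j t) := by
  intro n
  induction n with
  | zero =>
    intro z hz
    refine ⟨Unit, inferInstance, inferInstance, fun _ _ => 0, fun _ => contDiff_const, ?_, ?_⟩
    · intro j l hl t
      rw [show (fun _ : E => (0 : ℝ)) = 0 from rfl]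
      simp
    · intro t; simp [ifsU]
  | succ n ih =>
    intro z hz
    choose J hJ1 hJ2 A hA1 hA2 hA3 using fun i => ih _ (hinv z hz i)
    have hφc : ∀ i, ContDiff ℝ K (fun t => φ i (t, z t)) := fun i =>
      (H.hφ i).comp (contDiff_id.prodMk hz.1)
    refine ⟨Σ i, J i, inferInstance, ⟨⟨Classical.arbitrary ι, Classical.choice (hJ2 _)⟩⟩, fun j t => φ j.1 (t, z t) + A j.1 j.2 t,
      ?_, ?_, ?_⟩
    · intro j
      exact (hφc j.1).add (hA1 _ _)
    · intro j l hl t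
      have hlK : (l : WithTop ℕ∞) ≤ (K : WithTop ℕ∞) := by exact_mod_cast hl
      have e := iteratedFDeriv_add_apply (𝕜 := ℝ) (i := l) (x := t)
        ((hφc j.1).of_le hlK).contDiffAt ((hA1 j.1 j.2).of_le hlK).contDiffAt
      refine (le_of_eq (congrArg norm e)).trans ((norm_add_le _ _).trans ?_)
      have h1 := hz.comp_bound hc le_rfl (φ j.1) (H.hφ _) C H.hC (H.bφ j.1) l hl t
      rw [← hM] at h1
      have h2 := hA2 j.1 j.2 l hl t
      push_cast
      linarith
    · intro t
      rw [Fintype.sum_sigma]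
      simp only [ifsU]
      refine Finset.sum_congr rfl fun i _ => ?_
      have := hA3 i t
      rw [this, Finset.mul_sum]
      exact Finset.sum_congr rfl fun j _ => (Real.exp_add _ _).symm

lemma ifsU_pos {ι : Type} [Fintype ι] [Nonempty ι] (ψ φ : ι → E × ℝ → ℝ) (n : ℕ) :
    ∀ t y, 0 < ifsU ψ φ n t y := by
  induction n with
  | zero => intro t y; simp [ifsU]
  | succ n ih =>
    intro t y
    exact Finset.sum_pos (fun i _ => mul_pos (Real.exp_pos _) (ih _ _)) Finset.univ_nonempty

lemma log_ifsU_bound {ι : Type} [Fintype ι] [Nonempty ι] {K : ℕ} {R lam L C : ℝ}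
    {ψ φ : ι → E × ℝ → ℝ} (H : IFSFam K R lam L C ψ φ) :
    (∀ n, ContDiff ℝ K (fun t => Real.log (ifsU ψ φ n t 0))) ∧
    ∃ C' : ℝ, 0 ≤ C' ∧ ∀ n l, 1 ≤ l → l ≤ K → ∀ t,
      ‖iteratedFDeriv ℝ l (fun t => Real.log (ifsU ψ φ n t 0)) t‖ ≤ C' * (n + 1 : ℝ) ^ K := by
  obtain ⟨c, hc, hinv⟩ := exists_cur H K le_rfl
  have hz : Cur K K R c (fun _ : E => 0) := by
    refine ⟨contDiff_const, fun t => by simpa using H.hR.le, fun l h1 h2 t => ?_⟩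
    rw [iteratedFDeriv_const_of_ne (by omega)]
    simpa using hc l
  obtain ⟨C0, hC0, hlog⟩ := logSumExp_bound (E := E) K
  set M := K.factorial * C * (1 + ∑ i ∈ Finset.range (K + 1), c i) ^ K with hM
  have hMn : 0 ≤ M := by
    have := H.hC
    have : 0 ≤ ∑ i ∈ Finset.range (K + 1), c i := Finset.sum_nonneg fun i _ => hc i
    positivity
  choose J hJ1 hJ2 A hA1 hA2 hA3 using fun n => exists_A H hc hinv M hM n _ hz
  have e : ∀ n, (fun t => Real.log (ifsU ψ φ n t 0)) =
      fun t => Real.log (∑ j, Real.exp (A n j t)) := fun n => by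
    funext t; rw [← hA3 n t]
  refine ⟨fun n => ?_, C0 * (M + 1) ^ K, by positivity, fun n l h1 h2 t => ?_⟩
  · rw [e n]
    refine ContDiff.log (ContDiff.sum fun j _ => Real.contDiff_exp.comp (hA1 n j)) fun t => ?_
    rw [← hA3 n t]
    exact (ifsU_pos ψ φ n t 0).ne'
  · rw [e n]
    have := hlog (J n) (A n) ((M + 1) * (n + 1)) ?_ (hA1 n) t ?_ l h1 h2
    · rw [mul_pow] at this; linarith
    · nlinarith [(Nat.cast_nonneg n : (0:ℝ) ≤ n)]
    · intro j l _ hl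
      refine (hA2 n j l hl t).trans ?_
      nlinarith [(Nat.cast_nonneg n : (0:ℝ) ≤ n)]

end

/-! ### Contraction of the normalized transfer operators -/

/-- The transfer operator. -/
def opL {ι : Type} [Fintype ι] (ψ φ : ι → ℝ → ℝ) (v : ℝ → ℝ) (y : ℝ) : ℝ :=
  ∑ i, Real.exp (φ i y) * v (ψ i y)

/-- Iterates of the transfer operator on the constant function. -/
def opU {ι : Type} [Fintype ι] (ψ φ : ι → ℝ → ℝ) (n : ℕ) : ℝ → ℝ :=
  (opL ψ φ)^[n] (fun _ => 1)

/-- Weighted iterated function systems at a fixed parameter. -/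
structure Sys {ι : Type} (R lam L : ℝ) (ψ φ : ι → ℝ → ℝ) : Prop where
  hR : 0 < R
  hlam0 : 0 ≤ lam
  hlam1 : lam < 1
  hL : 0 ≤ L
  maps : ∀ i y, |y| ≤ R → |ψ i y| ≤ R
  lipψ : ∀ i y y', |ψ i y - ψ i y'| ≤ lam * |y - y'|
  lipφ : ∀ i y y', |φ i y - φ i y'| ≤ L * |y - y'|

/-- The distortion comparison. -/
def QQ (R Cd l : ℝ) (w u : ℝ → ℝ) : Prop :=
  (∀ y, |y| ≤ R → 0 ≤ w y) ∧
  ∀ y y', |y| ≤ R → |y'| ≤ R → w y ≤ Real.exp (Cd * |y - y'|) * (w y' + l * |y - y'| * u y')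

section
variable {ι : Type} [Fintype ι] [Nonempty ι] {R lam L Cd : ℝ} {ψ φ : ι → ℝ → ℝ}

lemma opU_succ (n : ℕ) : opU ψ φ (n + 1) = opL ψ φ (opU ψ φ n) := by
  simp only [opU, Function.iterate_succ_apply']

lemma opU_pos (n : ℕ) : ∀ y, 0 < opU ψ φ n y := by
  induction n with
  | zero => intro y; simp [opU]
  | succ n ih =>
    intro y
    rw [opU_succ]
    exact Finset.sum_pos (fun i _ => mul_pos (Real.exp_pos _) (ih _)) Finset.univ_nonempty

lemma QQ.step (H : Sys R lam L ψ φ) (hCd : L + Cd * lam = Cd) (hCd0 : 0 ≤ Cd) {l : ℝ} (hl : 0 ≤ l)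
    {w u : ℝ → ℝ} (hu : ∀ y, |y| ≤ R → 0 ≤ u y) (h : QQ R Cd l w u) :
    QQ R Cd (lam * l) (opL ψ φ w) (opL ψ φ u) := by
  refine ⟨fun y hy => Finset.sum_nonneg fun i _ =>
    mul_nonneg (Real.exp_pos _).le (h.1 _ (H.maps i y hy)), fun y y' hy hy' => ?_⟩
  simp only [opL]
  rw [Finset.mul_sum, ← Finset.sum_add_distrib, Finset.mul_sum]
  refine Finset.sum_le_sum fun i _ => ?_
  have h1 := H.lipψ i y y'
  have h2 := (abs_le.1 (H.lipφ i y y')).2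
  have hw' := h.1 _ (H.maps i y' hy')
  have hu' := hu _ (H.maps i y' hy')
  have hl0 := H.hlam0
  set s := |y - y'|
  have hs : 0 ≤ s := abs_nonneg _
  calc Real.exp (φ i y) * w (ψ i y)
      ≤ Real.exp (φ i y' + L * s) * (Real.exp (Cd * (lam * s)) *
        (w (ψ i y') + l * (lam * s) * u (ψ i y'))) := by
        refine mul_le_mul (Real.exp_le_exp.2 (by linarith)) ?_ (h.1 _ (H.maps i y hy))
          (Real.exp_pos _).le
        refine (h.2 _ _ (H.maps i y hy) (H.maps i y' hy')).trans ?_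
        gcongr
    _ = _ := by
        have : Real.exp (Cd * s) = Real.exp (L * s) * Real.exp (Cd * (lam * s)) := by
          rw [← Real.exp_add]; congr 1
          calc Cd * s = (L + Cd * lam) * s := by rw [hCd]
            _ = _ := by ring
        rw [this, Real.exp_add]; ring

lemma QQ.iter (H : Sys R lam L ψ φ) (hCd : L + Cd * lam = Cd) (hCd0 : 0 ≤ Cd) {l : ℝ} (hl : 0 ≤ l)
    {w u : ℝ → ℝ} (hu : ∀ y, |y| ≤ R → 0 ≤ u y) (h : QQ R Cd l w u) (m : ℕ) :
    QQ R Cd (lam ^ m * l) ((opL ψ φ)^[m] w) ((opL ψ φ)^[m] u) := by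
  have hpos : ∀ m y, |y| ≤ R → 0 ≤ (opL ψ φ)^[m] u y := by
    intro m
    induction m with
    | zero => simpa using hu
    | succ m ih =>
      intro y hy
      rw [Function.iterate_succ_apply']
      exact Finset.sum_nonneg fun i _ => mul_nonneg (Real.exp_pos _).le (ih _ (H.maps i y hy))
  have hl0 := H.hlam0
  induction m with
  | zero => simpa using h
  | succ m ih =>
    rw [Function.iterate_succ_apply', Function.iterate_succ_apply', pow_succ', mul_assoc]
    exact ih.step H hCd hCd0 (by positivity) (hpos m)

lemma opU_QQ (H : Sys R lam L ψ φ) (hCd : L + Cd * lam = Cd) (hCd0 : 0 ≤ Cd) (n : ℕ) :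
    ∀ y y', |y| ≤ R → |y'| ≤ R → opU ψ φ n y ≤ Real.exp (Cd * |y - y'|) * opU ψ φ n y' := by
  have h0 : QQ R Cd 0 (fun _ => (1:ℝ)) (fun _ => 1) := by
    refine ⟨fun _ _ => zero_le_one, fun y y' _ _ => ?_⟩
    simpa using mul_nonneg hCd0 (abs_nonneg (y - y'))
  have := (h0.iter H hCd hCd0 le_rfl (fun _ _ => zero_le_one) n).2
  simpa [opU] using this

lemma opL_lin (a b : ℝ) (v w : ℝ → ℝ) :
    opL ψ φ (fun y => a * v y + b * w y) = fun y => a * opL ψ φ v y + b * opL ψ φ w y := by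
  funext y
  simp only [opL, Finset.mul_sum, ← Finset.sum_add_distrib]
  exact Finset.sum_congr rfl fun i _ => by ring

lemma opL_iter_lin (a b : ℝ) (n m : ℕ) :
    (opL ψ φ)^[m] (fun y => a * opU ψ φ (n + 1) y + b * opU ψ φ n y) =
      fun y => a * opU ψ φ (n + m + 1) y + b * opU ψ φ (n + m) y := by
  induction m with
  | zero => rfl
  | succ m ih =>
    rw [Function.iterate_succ_apply', ih, opL_lin, ← opU_succ, ← opU_succ]
    rfl

/-- Ratios of consecutive iterates. -/
def ratU {ι : Type} [Fintype ι] (ψ φ : ι → ℝ → ℝ) (n : ℕ) (y : ℝ) : ℝ :=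
  opU ψ φ (n + 1) y / opU ψ φ n y

lemma ratU_range_step (H : Sys R lam L ψ φ) {n : ℕ} {c c' : ℝ}
    (h : ∀ y, |y| ≤ R → c ≤ ratU ψ φ n y ∧ ratU ψ φ n y ≤ c') :
    ∀ y, |y| ≤ R → c ≤ ratU ψ φ (n + 1) y ∧ ratU ψ φ (n + 1) y ≤ c' := by
  intro y hy
  unfold ratU at *
  rw [le_div_iff₀ (opU_pos _ _), div_le_iff₀ (opU_pos _ _)]
  have e : opU ψ φ (n + 1) y = ∑ i, Real.exp (φ i y) * opU ψ φ n (ψ i y) := by rw [opU_succ]; rfl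
  have e' : opU ψ φ (n + 1 + 1) y = ∑ i, Real.exp (φ i y) * opU ψ φ (n + 1) (ψ i y) := by
    rw [opU_succ (n + 1)]; rfl
  rw [e, e', Finset.mul_sum, Finset.mul_sum]
  constructor
  · refine Finset.sum_le_sum fun i _ => ?_
    have := (h _ (H.maps i y hy)).1
    rw [le_div_iff₀ (opU_pos _ _)] at this
    rw [mul_left_comm]
    exact mul_le_mul_of_nonneg_left this (Real.exp_pos _).le
  · refine Finset.sum_le_sum fun i _ => ?_
    have := (h _ (H.maps i y hy)).2
    rw [div_le_iff₀ (opU_pos _ _)] at this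
    rw [mul_left_comm]
    exact mul_le_mul_of_nonneg_left this (Real.exp_pos _).le

lemma ratU_range (H : Sys R lam L ψ φ) {n : ℕ} {c c' : ℝ}
    (h : ∀ y, |y| ≤ R → c ≤ ratU ψ φ n y ∧ ratU ψ φ n y ≤ c') (j : ℕ) (hj : n ≤ j) :
    ∀ y, |y| ≤ R → c ≤ ratU ψ φ j y ∧ ratU ψ φ j y ≤ c' := by
  induction j, hj using Nat.le_induction with
  | base => exact h
  | succ j _ ih => exact ratU_range_step H ih

/-- The ratio at time `n` lies in an interval of length `a` and is Lipschitz. -/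
def BB {ι : Type} [Fintype ι] (R Kc : ℝ) (ψ φ : ι → ℝ → ℝ) (n : ℕ) (a : ℝ) : Prop :=
  ∃ c, (∀ y, |y| ≤ R → c ≤ ratU ψ φ n y ∧ ratU ψ φ n y ≤ c + a) ∧
    ∀ y y', |y| ≤ R → |y'| ≤ R → |ratU ψ φ n y - ratU ψ φ n y'| ≤ Kc * a * |y - y'|

lemma QQ_of_lip (H : Sys R lam L ψ φ) (hCd : L + Cd * lam = Cd) (hCd0 : 0 ≤ Cd) {n : ℕ} {c b l : ℝ}
    (h0 : ∀ y, |y| ≤ R → 0 ≤ c * ratU ψ φ n y + b)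
    (hl : ∀ y y', |y| ≤ R → |y'| ≤ R →
      |(c * ratU ψ φ n y + b) - (c * ratU ψ φ n y' + b)| ≤ l * |y - y'|) :
    QQ R Cd l (fun y => c * opU ψ φ (n + 1) y + b * opU ψ φ n y) (opU ψ φ n) := by
  have e : ∀ y, c * opU ψ φ (n + 1) y + b * opU ψ φ n y =
      (c * ratU ψ φ n y + b) * opU ψ φ n y := by
    intro y
    have := (opU_pos (ψ := ψ) (φ := φ) n y).ne'
    unfold ratU; field_simp
  refine ⟨fun y hy => ?_, fun y y' hy hy' => ?_⟩
  · simp only [e]; exact mul_nonneg (h0 y hy) (opU_pos _ _).le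
  · simp only [e]
    have h1 := (abs_le.1 (hl y y' hy hy')).2
    have h2 := opU_QQ H hCd hCd0 n y y' hy hy'
    have h3 := h0 y' hy'
    have h4 := h0 y hy
    calc (c * ratU ψ φ n y + b) * opU ψ φ n y
        ≤ ((c * ratU ψ φ n y' + b) + l * |y - y'|) *
          (Real.exp (Cd * |y - y'|) * opU ψ φ n y') := by
          refine mul_le_mul (by linarith) h2 (opU_pos _ _).le (by linarith)
      _ = _ := by ring

/-- Consequence of `QQ` on ratios. -/
lemma rat_of_QQ (H : Sys R lam L ψ φ) (hCd : L + Cd * lam = Cd) (hCd0 : 0 ≤ Cd) {n : ℕ} {c b l : ℝ}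
    (hl : 0 ≤ l)
    (h : QQ R Cd l (fun y => c * opU ψ φ (n + 1) y + b * opU ψ φ n y) (opU ψ φ n)) :
    ∀ y y', |y| ≤ R → |y'| ≤ R → (c * ratU ψ φ n y + b) ≤
      Real.exp (2 * Cd * |y - y'|) * ((c * ratU ψ φ n y' + b) + l * |y - y'|) := by
  have e : ∀ y, c * opU ψ φ (n + 1) y + b * opU ψ φ n y =
      (c * ratU ψ φ n y + b) * opU ψ φ n y := by
    intro y
    have := (opU_pos (ψ := ψ) (φ := φ) n y).ne'
    unfold ratU; field_simp
  intro y y' hy hy'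
  have h1 := h.2 y y' hy hy'
  have h0 := h.1 y' hy'
  simp only [e] at h1 h0
  have hp := opU_pos (ψ := ψ) (φ := φ) n y
  have hp' := opU_pos (ψ := ψ) (φ := φ) n y'
  have h0' : 0 ≤ c * ratU ψ φ n y' + b := by
    by_contra hc
    push Not at hc
    nlinarith
  have h2 := opU_QQ H hCd hCd0 n y' y hy' hy
  rw [abs_sub_comm y' y] at h2
  refine le_of_mul_le_mul_right ?_ hp
  refine h1.trans ?_
  have hs : 0 ≤ |y - y'| := abs_nonneg _
  calc Real.exp (Cd * |y - y'|) * ((c * ratU ψ φ n y' + b) * opU ψ φ n y' +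
        l * |y - y'| * opU ψ φ n y')
      = Real.exp (Cd * |y - y'|) * ((c * ratU ψ φ n y' + b) + l * |y - y'|) * opU ψ φ n y' := by
        ring
    _ ≤ Real.exp (Cd * |y - y'|) * ((c * ratU ψ φ n y' + b) + l * |y - y'|) *
        (Real.exp (Cd * |y - y'|) * opU ψ φ n y) := by gcongr
    _ = _ := by
      rw [show 2 * Cd * |y - y'| = Cd * |y - y'| + Cd * |y - y'| by ring, Real.exp_add]; ring

lemma BB_step (H : Sys R lam L ψ φ) (hCd : L + Cd * lam = Cd) (hCd0 : 0 ≤ Cd) {κ Kc : ℝ} {m n : ℕ}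
    (hκ : κ = Real.exp (2 * Cd * (2 * R))) (hK : Kc = 8 * Cd * κ)
    (hm1 : κ * lam ^ m ≤ 1 / 4) (hm2 : 4 * R * (Kc * lam ^ m) ≤ 1 / (2 * κ)) {a : ℝ} (ha : 0 ≤ a)
    (h : BB R Kc ψ φ n a) : BB R Kc ψ φ (n + m) ((1 - 1 / (2 * κ)) * a) := by
  obtain ⟨c, hc, hlip⟩ := h
  have hR := H.hR
  have hκ1 : 1 ≤ κ := by rw [hκ]; exact Real.one_le_exp (by positivity)
  have hK0 : 0 ≤ Kc := by rw [hK]; positivity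
  have hlam0 := H.hlam0
  set l := lam ^ m * (Kc * a) with hl
  have hl0 : 0 ≤ l := by positivity
  have hpos : ∀ y, |y| ≤ R → 0 ≤ opU ψ φ n y := fun y _ => (opU_pos _ _).le
  have q1 : QQ R Cd (Kc * a) (fun y => 1 * opU ψ φ (n + 1) y + (-c) * opU ψ φ n y) (opU ψ φ n) := by
    refine QQ_of_lip H hCd hCd0 (fun y hy => by linarith [(hc y hy).1]) fun y y' hy hy' => ?_
    have := hlip y y' hy hy'
    ring_nf at this ⊢
    exact this
  have q2 : QQ R Cd (Kc * a) (fun y => (-1) * opU ψ φ (n + 1) y + (c + a) * opU ψ φ n y)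
      (opU ψ φ n) := by
    refine QQ_of_lip H hCd hCd0 (fun y hy => by linarith [(hc y hy).2]) fun y y' hy hy' => ?_
    have := hlip y' y hy' hy
    rw [abs_sub_comm y' y] at this
    ring_nf at this ⊢
    exact this
  have q1' := q1.iter H hCd hCd0 (by positivity) hpos m
  have q2' := q2.iter H hCd hCd0 (by positivity) hpos m
  have eU : (opL ψ φ)^[m] (opU ψ φ n) = opU ψ φ (n + m) := by
    unfold opU; rw [← Function.iterate_add_apply, Nat.add_comm]
  rw [opL_iter_lin, eU] at q1' q2'
  have r1 := rat_of_QQ H hCd hCd0 hl0 q1'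
  have r2 := rat_of_QQ H hCd hCd0 hl0 q2'
  have hr := ratU_range H hc (n + m) (by omega)
  set Z := ratU ψ φ (n + m) with hZ
  -- bounds of exponentials
  have hs2 : ∀ y y' : ℝ, |y| ≤ R → |y'| ≤ R → |y - y'| ≤ 2 * R := fun y y' hy hy' => by
    have := abs_sub y y'; linarith
  have hex : ∀ y y' : ℝ, |y| ≤ R → |y'| ≤ R → Real.exp (2 * Cd * |y - y'|) ≤ κ :=
    fun y y' hy hy' => by
      rw [hκ]; apply Real.exp_le_exp.2
      exact mul_le_mul_of_nonneg_left (hs2 y y' hy hy') (by positivity)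
  have hex2 : ∀ y y' : ℝ, |y| ≤ R → |y'| ≤ R →
      Real.exp (2 * Cd * |y - y'|) - 1 ≤ 2 * Cd * κ * |y - y'| := fun y y' hy hy' => by
    have h1 := Real.add_one_le_exp (-(2 * Cd * |y - y'|))
    have h2 := hex y y' hy hy'
    have h3 : Real.exp (2 * Cd * |y - y'|) * Real.exp (-(2 * Cd * |y - y'|)) = 1 := by
      rw [← Real.exp_add]; simp
    have h4 := Real.exp_pos (2 * Cd * |y - y'|)
    have h5 : 0 ≤ 2 * Cd * |y - y'| := by positivity
    nlinarith
  have hR0 : |(0:ℝ)| ≤ R := by simpa using hR.le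
  have g1 : ∀ y, |y| ≤ R → (Z 0 - c) ≤ κ * (Z y - c + l * (2 * R)) := fun y hy => by
    have h1 := r1 0 y hR0 hy
    have h2 := (hr y hy).1
    have h3 := hs2 0 y hR0 hy
    have : Real.exp (2 * Cd * |0 - y|) * ((1 * Z y + -c) + l * |0 - y|) ≤
        κ * (Z y - c + l * (2 * R)) := by
      refine mul_le_mul (hex 0 y hR0 hy) ?_ ?_ (by linarith)
      · have := mul_le_mul_of_nonneg_left h3 hl0; linarith
      · have := mul_nonneg hl0 (abs_nonneg (0 - y)); linarith
    linarith
  have g2 : ∀ y, |y| ≤ R → (c + a - Z 0) ≤ κ * (c + a - Z y + l * (2 * R)) := fun y hy => by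
    have h1 := r2 0 y hR0 hy
    have h2 := (hr y hy).2
    have h3 := hs2 0 y hR0 hy
    have : Real.exp (2 * Cd * |0 - y|) * ((-1 * Z y + (c + a)) + l * |0 - y|) ≤
        κ * (c + a - Z y + l * (2 * R)) := by
      refine mul_le_mul (hex 0 y hR0 hy) ?_ ?_ (by linarith)
      · have := mul_le_mul_of_nonneg_left h3 hl0; linarith
      · have := mul_nonneg hl0 (abs_nonneg (0 - y)); linarith
    linarith
  have hκ0 : 0 < κ := by linarith
  have hθ : (1:ℝ) / (2 * κ) = (1 / κ) / 2 := by field_simp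
  have hε : 2 * (l * (2 * R)) ≤ 1 / (2 * κ) * a := by
    have := mul_le_mul_of_nonneg_right hm2 ha
    calc 2 * (l * (2 * R)) = 4 * R * (Kc * lam ^ m) * a := by rw [hl]; ring
      _ ≤ _ := this
  refine ⟨c + (Z 0 - c) / κ - l * (2 * R), fun y hy => ⟨?_, ?_⟩, fun y y' hy hy' => ?_⟩
  · have := g1 y hy
    have h2 : (Z 0 - c) / κ ≤ Z y - c + l * (2 * R) := by rw [div_le_iff₀ hκ0]; linarith
    linarith
  · have := g2 y hy
    have h2 : (c + a - Z 0) / κ ≤ c + a - Z y + l * (2 * R) := by rw [div_le_iff₀ hκ0]; linarith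
    have h3 : (c + a - Z 0) / κ = 1 / κ * a - (Z 0 - c) / κ := by field_simp; ring
    rw [hθ] at hε ⊢
    nlinarith
  · have key : ∀ y y', |y| ≤ R → |y'| ≤ R →
        Z y - Z y' ≤ Kc * ((1 - 1 / (2 * κ)) * a) * |y - y'| := fun y y' hy hy' => by
      have h1 := r1 y y' hy hy'
      have h2 := hex y y' hy hy'
      have h3 := hex2 y y' hy hy'
      have h4 := hr y' hy'
      set s := |y - y'|
      have hs : 0 ≤ s := abs_nonneg _
      set X := Real.exp (2 * Cd * s)
      have hX : 1 ≤ X := Real.one_le_exp (by positivity)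
      have h5 : (X - 1) * (Z y' - c) ≤ 2 * Cd * κ * s * a :=
        mul_le_mul h3 (by linarith) (by linarith) (by positivity)
      have h6 : X * (l * s) ≤ κ * (l * s) := mul_le_mul_of_nonneg_right h2 (by positivity)
      have h7 : κ * (l * s) ≤ 1 / 4 * (Kc * a * s) := by
        have := mul_le_mul_of_nonneg_right hm1 (by positivity : 0 ≤ Kc * a * s)
        calc κ * (l * s) = κ * lam ^ m * (Kc * a * s) := by rw [hl]; ring
          _ ≤ _ := this
      have h8 : 2 * Cd * κ * s * a = 1 / 4 * (Kc * a * s) := by rw [hK]; ring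
      have h9 : (1:ℝ) / (2 * κ) ≤ 1 / 2 := by
        apply one_div_le_one_div_of_le <;> linarith
      have h10 : 1 / 2 * (Kc * a * s) ≤ (1 - 1 / (2 * κ)) * (Kc * a * s) :=
        mul_le_mul_of_nonneg_right (by linarith) (by positivity)
      calc Z y - Z y' ≤ (X - 1) * (Z y' - c) + X * (l * s) := by linarith
        _ ≤ 1 / 2 * (Kc * a * s) := by linarith
        _ ≤ _ := by linarith
    rw [abs_le]
    have k1 := key y y' hy hy'
    have k2 := key y' y hy' hy
    rw [abs_sub_comm y' y] at k2
    constructor <;> linarith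

end

/-- Uniform exponential convergence of the ratios. -/
theorem rpf (R lam L : ℝ) (hR : 0 < R) (hlam0 : 0 ≤ lam) (hlam1 : lam < 1) (hL : 0 ≤ L) :
    ∃ (m : ℕ) (θ : ℝ), 1 ≤ m ∧ 0 ≤ θ ∧ θ < 1 ∧ ∀ (ι : Type) [Fintype ι] [Nonempty ι]
      (ψ φ : ι → ℝ → ℝ) (_ : Sys R lam L ψ φ) (B : ℝ) (_ : ∀ i y, |y| ≤ R → |φ i y| ≤ B),
      (∀ n, Fintype.card ι * Real.exp (-B) ≤ ratU ψ φ n 0 ∧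
        ratU ψ φ n 0 ≤ Fintype.card ι * Real.exp B) ∧
      ∀ k n n', k * m ≤ n → k * m ≤ n' →
        |ratU ψ φ n 0 - ratU ψ φ n' 0| ≤ Fintype.card ι * Real.exp B * θ ^ k := by
  have h1l : 0 < 1 - lam := by linarith
  set Cd := L / (1 - lam) with hCddef
  have hCd0 : 0 ≤ Cd := by positivity
  have hCd : L + Cd * lam = Cd := by rw [hCddef]; field_simp; ring
  set κ := Real.exp (2 * Cd * (2 * R)) with hκ
  have hκ1 : 1 ≤ κ := by rw [hκ]; exact Real.one_le_exp (by positivity)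
  set Kc := 8 * Cd * κ with hK
  have hK0 : 0 ≤ Kc := by positivity
  obtain ⟨m, hm⟩ : ∃ m : ℕ, lam ^ m < min (1 / (4 * κ)) (1 / (2 * κ * (4 * R * Kc + 1))) :=
    exists_pow_lt_of_lt_one (by positivity) hlam1
  have hlm : lam ^ (m + 1) ≤ lam ^ m := pow_le_pow_of_le_one hlam0 hlam1.le (by omega)
  have hm1 : κ * lam ^ (m + 1) ≤ 1 / 4 := by
    have := (hlm.trans hm.le).trans (min_le_left _ _)
    rw [le_div_iff₀ (by positivity)] at this
    linarith
  have hm2 : 4 * R * (Kc * lam ^ (m + 1)) ≤ 1 / (2 * κ) := by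
    have := (hlm.trans hm.le).trans (min_le_right _ _)
    rw [le_div_iff₀ (by positivity)] at this ⊢
    have h0 : 0 ≤ lam ^ (m + 1) * (2 * κ) := by positivity
    nlinarith
  have hθ : (1:ℝ) / (2 * κ) ≤ 1 / 2 := by
    apply one_div_le_one_div_of_le <;> linarith
  have hθ0 : 0 < (1:ℝ) / (2 * κ) := by positivity
  refine ⟨m + 1, 1 - 1 / (2 * κ), by omega, by linarith, by linarith, ?_⟩
  intro ι _ _ ψ φ H B hB
  set a0 := Fintype.card ι * Real.exp B with ha0
  have ha00 : 0 ≤ a0 := by positivity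
  have e0 : ∀ y, ratU ψ φ 0 y = ∑ i, Real.exp (φ i y) := fun y => by
    simp [ratU, opU, opL]
  have hr0 : ∀ y, |y| ≤ R → Fintype.card ι * Real.exp (-B) ≤ ratU ψ φ 0 y ∧
      ratU ψ φ 0 y ≤ a0 := by
    intro y hy
    rw [e0]
    have h1 := Finset.card_nsmul_le_sum Finset.univ (fun i => Real.exp (φ i y)) (Real.exp (-B))
      (fun i _ => Real.exp_le_exp.2 (abs_le.1 (hB i y hy)).1)
    have h2 := Finset.sum_le_card_nsmul Finset.univ (fun i => Real.exp (φ i y)) (Real.exp B)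
      (fun i _ => Real.exp_le_exp.2 (abs_le.1 (hB i y hy)).2)
    simp only [nsmul_eq_mul, Finset.card_univ] at h1 h2
    exact ⟨h1, h2⟩
  have hR0 : |(0:ℝ)| ≤ R := by simpa using hR.le
  refine ⟨fun n => ratU_range H hr0 n (Nat.zero_le _) 0 hR0, ?_⟩
  have b0 : BB R Kc ψ φ 0 a0 := by
    refine ⟨0, fun y hy => ⟨le_trans (by positivity) (hr0 y hy).1, by linarith [(hr0 y hy).2]⟩, ?_⟩
    have key : ∀ y y', |y| ≤ R → |y'| ≤ R →
        ratU ψ φ 0 y - ratU ψ φ 0 y' ≤ Kc * a0 * |y - y'| := fun y y' hy hy' => by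
      have h1 := opU_QQ H hCd hCd0 1 y y' hy hy'
      have e1 : ∀ y, opU ψ φ 1 y = ratU ψ φ 0 y := fun y => by simp [ratU, opU]
      rw [e1, e1] at h1
      have h3 := Real.add_one_le_exp (-(Cd * |y - y'|))
      have h4 : Real.exp (Cd * |y - y'|) * Real.exp (-(Cd * |y - y'|)) = 1 := by
        rw [← Real.exp_add]; simp
      have h5 : Real.exp (Cd * |y - y'|) ≤ κ := by
        apply Real.exp_le_exp.2
        have := abs_sub y y'
        have : Cd * |y - y'| ≤ Cd * (2 * R) := mul_le_mul_of_nonneg_left (by linarith) hCd0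
        nlinarith
      set s := |y - y'|
      have hs : 0 ≤ s := abs_nonneg _
      have hX0 := Real.exp_pos (Cd * s)
      set X := Real.exp (Cd * s)
      have hX : X - 1 ≤ Kc * s := by
        have : 0 ≤ Cd * s := by positivity
        have : X - 1 ≤ κ * (Cd * s) := by nlinarith
        rw [hK]
        nlinarith [mul_nonneg (by linarith : 0 ≤ κ) (by positivity : 0 ≤ Cd * s)]
      have hy1 := (hr0 y' hy').2
      have hy2 : 0 ≤ ratU ψ φ 0 y' := le_trans (by positivity) (hr0 y' hy').1
      calc ratU ψ φ 0 y - ratU ψ φ 0 y' ≤ (X - 1) * ratU ψ φ 0 y' := by linarith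
        _ ≤ Kc * s * a0 := mul_le_mul hX hy1 hy2 (by positivity)
        _ = _ := by ring
    intro y y' hy hy'
    rw [abs_le]
    have k1 := key y y' hy hy'
    have k2 := key y' y hy' hy
    rw [abs_sub_comm y' y] at k2
    constructor <;> linarith
  have bk : ∀ k, BB R Kc ψ φ (k * (m + 1)) (a0 * (1 - 1 / (2 * κ)) ^ k) := by
    intro k
    induction k with
    | zero => simpa using b0
    | succ k ih =>
      have hp : 0 ≤ 1 - 1 / (2 * κ) := by linarith
      have := BB_step H hCd hCd0 hκ hK hm1 hm2 (by positivity) ih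
      rw [show (k + 1) * (m + 1) = k * (m + 1) + (m + 1) by ring,
        show a0 * (1 - 1 / (2 * κ)) ^ (k + 1) = (1 - 1 / (2 * κ)) * (a0 * (1 - 1 / (2 * κ)) ^ k) by
          ring]
      exact this
  intro k n n' hn hn'
  obtain ⟨c, hc, -⟩ := bk k
  have h1 := ratU_range H hc n hn 0 hR0
  have h2 := ratU_range H hc n' hn' 0 hR0
  rw [abs_le]
  constructor <;> linarith

/-! ### Smoothness of the leading eigenvalue -/

lemma ifsU_eq_opU {E : Type*} {ι : Type} [Fintype ι] [Nonempty ι] (ψ φ : ι → E × ℝ → ℝ) (n : ℕ)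
    (t : E) :
    ifsU ψ φ n t = opU (fun i y => ψ i (t, y)) (fun i y => φ i (t, y)) n := by
  induction n with
  | zero => rfl
  | succ n ih =>
    funext y
    rw [opU_succ]
    simp only [ifsU, opL, ih]

lemma exists_poly_bound (θ : ℝ) (h0 : 0 ≤ θ) (h1 : θ < 1) (q : ℕ) :
    ∃ A : ℝ, ∀ k : ℕ, θ ^ k ≤ A / (k + 1 : ℝ) ^ q := by
  have h := tendsto_pow_const_mul_const_pow_of_abs_lt_one q (r := θ)
    (by rw [abs_of_nonneg h0]; exact h1)
  have h2 := (h.comp (tendsto_add_atTop_nat 1)).bddAbove_range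
  obtain ⟨A, hA⟩ := h2
  by_cases hθ : θ = 0
  · refine ⟨1, fun k => ?_⟩
    rcases Nat.eq_zero_or_pos k with rfl | hk
    · simp
    · rw [hθ, zero_pow (by omega)]; positivity
  have hθ0 : 0 < θ := lt_of_le_of_ne h0 (Ne.symm hθ)
  refine ⟨A / θ, fun k => ?_⟩
  have : ((k + 1 : ℕ) : ℝ) ^ q * θ ^ (k + 1) ≤ A := hA ⟨k, rfl⟩
  rw [le_div_iff₀ (by positivity), le_div_iff₀ hθ0]
  push_cast at this
  calc θ ^ k * (k + 1 : ℝ) ^ q * θ = (k + 1 : ℝ) ^ q * θ ^ (k + 1) := by ring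
    _ ≤ A := this

theorem smooth_rho {E : Type*} [NormedAddCommGroup E] [NormedSpace ℝ E]
    {ι : Type} [Fintype ι] [Nonempty ι] {K : ℕ} {R lam L C : ℝ}
    {ψ φ : ι → E × ℝ → ℝ} (H : IFSFam K R lam L C ψ φ) :
    ∃ ρ : E → ℝ, ContDiff ℝ (K - 1 : ℕ) ρ ∧ ∀ t, 0 < ρ t ∧
      Tendsto (fun n : ℕ => Real.log (ifsU ψ φ n t 0) / n) atTop (𝓝 (Real.log (ρ t))) := by
  obtain ⟨m, θ, hm, hθ0, hθ1, hrpf⟩ := rpf R lam L H.hR H.hlam0 H.hlam1 H.hL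
  have hsys : ∀ t, Sys R lam L (fun i y => ψ i (t, y)) (fun i y => φ i (t, y)) := fun t =>
    ⟨H.hR, H.hlam0, H.hlam1, H.hL, fun i y hy => H.maps i t y hy, fun i y y' => H.lipψ i t y y',
      fun i y y' => H.lipφ i t y y'⟩
  have hB : ∀ t i y, |y| ≤ R → |φ i (t, y)| ≤ C := fun t i y hy => by
    have := H.bφ i 0 (Nat.zero_le _) t y hy
    rwa [norm_iteratedFDeriv_zero] at this
  have hmain := fun t => hrpf ι _ _ (hsys t) C (hB t)
  set rat : ℕ → E → ℝ := fun n t => ratU (fun i y => ψ i (t, y)) (fun i y => φ i (t, y)) n 0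
    with hrat
  set b := Fintype.card ι * Real.exp C with hb
  set c0 := Fintype.card ι * Real.exp (-C) with hc0
  have hcard : (0:ℝ) < Fintype.card ι := by exact_mod_cast Fintype.card_pos
  have hc00 : 0 < c0 := by positivity
  have hb0 : 0 < b := by positivity
  have hr1 : ∀ t n, c0 ≤ rat n t := fun t n => ((hmain t).1 n).1
  have hr2 : ∀ t n, rat n t ≤ b := fun t n => ((hmain t).1 n).2
  have hr3 : ∀ t k n n', k * m ≤ n → k * m ≤ n' → |rat n t - rat n' t| ≤ b * θ ^ k :=
    fun t => (hmain t).2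
  have hratlog : ∀ n t, Real.log (rat n t) =
      Real.log (ifsU ψ φ (n + 1) t 0) - Real.log (ifsU ψ φ n t 0) := fun n t => by
    rw [ifsU_eq_opU, ifsU_eq_opU, hrat]
    simp only [ratU]
    rw [Real.log_div (opU_pos _ _).ne' (opU_pos _ _).ne']
  -- convergence
  have hθt : Tendsto (fun k => b * θ ^ k) atTop (𝓝 0) := by
    simpa using (tendsto_pow_atTop_nhds_zero_of_lt_one hθ0 hθ1).const_mul b
  have hconv : ∀ t, ∃ ρ, Tendsto (fun n => rat n t) atTop (𝓝 ρ) := fun t => by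
    apply cauchySeq_tendsto_of_complete
    rw [Metric.cauchySeq_iff]
    intro ε hε
    obtain ⟨k, hk⟩ := (hθt.eventually (gt_mem_nhds hε)).exists
    exact ⟨k * m, fun n hn n' hn' => (hr3 t k n n' hn hn').trans_lt hk⟩
  choose ρ hρ using hconv
  have hρ0 : ∀ t, c0 ≤ ρ t := fun t => ge_of_tendsto' (hρ t) (hr1 t)
  have hρpos : ∀ t, 0 < ρ t := fun t => hc00.trans_le (hρ0 t)
  have hlogt : ∀ t, Tendsto (fun n => Real.log (rat n t)) atTop (𝓝 (Real.log (ρ t))) := fun t =>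
    (hρ t).log (hρpos t).ne'
  refine ⟨ρ, ?_, fun t => ⟨hρpos t, ?_⟩⟩
  · have hsm : ContDiff ℝ (K - 1 : ℕ) (fun t => Real.log (ρ t)) := by
      obtain ⟨hcd, C', hC'0, hC'⟩ := log_ifsU_bound H
      have ef : ∀ k : ℕ, (fun t => Real.log (rat (k * m) t)) = fun t =>
          Real.log (ifsU ψ φ (k * m + 1) t 0) - Real.log (ifsU ψ φ (k * m) t 0) := fun k =>
        funext fun t => hratlog (k * m) t
      have hlogdiff : ∀ x y : ℝ, c0 ≤ x → c0 ≤ y → |Real.log x - Real.log y| ≤ |x - y| / c0 := by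
        have key : ∀ x y : ℝ, c0 ≤ x → c0 ≤ y → Real.log x - Real.log y ≤ |x - y| / c0 := by
          intro x y hx hy
          have hx0 : 0 < x := by linarith
          have hy0 : 0 < y := by linarith
          rw [← Real.log_div hx0.ne' hy0.ne']
          have h1 := Real.log_le_sub_one_of_pos (div_pos hx0 hy0)
          have h2 : x / y - 1 = (x - y) / y := by field_simp
          rw [h2] at h1
          refine h1.trans ?_
          calc (x - y) / y ≤ |x - y| / y := by gcongr; exact le_abs_self _
            _ ≤ |x - y| / c0 := by gcongr
        intro x y hx hy
        rw [abs_le]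
        have h1 := key x y hx hy
        have h2 := key y x hy hx
        rw [abs_sub_comm y x] at h2
        constructor <;> linarith
      refine contDiff_of_rapid (E := E) K (fun k t => Real.log (rat (k * m) t)) (fun k => ?_)
        (2 * C' * (m + 2 : ℝ) ^ K + |Real.log b| + |Real.log c0|) K ?_ ?_ _ ?_
      · show ContDiff ℝ K (fun t => Real.log (rat (k * m) t))
        rw [ef]; exact (hcd _).sub (hcd _)
      · intro j hj k t
        have hk1 : (1:ℝ) ≤ (k + 1 : ℝ) ^ K := one_le_pow₀ (by linarith [(Nat.cast_nonneg k : (0:ℝ) ≤ k)])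
        have hmn : 0 ≤ 2 * C' * (m + 2 : ℝ) ^ K := by positivity
        rcases Nat.eq_zero_or_pos j with rfl | hj1
        · rw [norm_iteratedFDeriv_zero, Real.norm_eq_abs]
          have h1 : Real.log (rat (k * m) t) ≤ Real.log b :=
            Real.log_le_log (hc00.trans_le (hr1 t _)) (hr2 t _)
          have h2 : Real.log c0 ≤ Real.log (rat (k * m) t) := Real.log_le_log hc00 (hr1 t _)
          have h3 : |Real.log (rat (k * m) t)| ≤ |Real.log b| + |Real.log c0| := by
            rw [abs_le]
            have := le_abs_self (Real.log b)
            have := neg_abs_le (Real.log c0)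
            have := abs_nonneg (Real.log c0)
            have := abs_nonneg (Real.log b)
            constructor <;> linarith
          refine h3.trans ?_
          have h4 : 0 ≤ |Real.log b| + |Real.log c0| := by positivity
          nlinarith
        · show ‖iteratedFDeriv ℝ j (fun t => Real.log (rat (k * m) t)) t‖ ≤ _
          rw [ef]
          have hjK : (j : WithTop ℕ∞) ≤ (K : WithTop ℕ∞) := by exact_mod_cast hj
          have e := iteratedFDeriv_sub_apply (𝕜 := ℝ) (i := j) (x := t)
            ((hcd (k * m + 1)).of_le hjK).contDiffAt ((hcd (k * m)).of_le hjK).contDiffAt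
          refine (le_of_eq (congrArg norm e)).trans ((norm_sub_le _ _).trans ?_)
          have h1 := hC' (k * m + 1) j hj1 hj t
          have h2 := hC' (k * m) j hj1 hj t
          have hk0 : (0:ℝ) ≤ k := Nat.cast_nonneg k
          have hm0 : (0:ℝ) ≤ m := Nat.cast_nonneg m
          have h3 : (((k * m + 1 : ℕ) : ℝ) + 1) ^ K ≤ ((m + 2 : ℝ) * (k + 1)) ^ K := by
            gcongr; push_cast; nlinarith
          have h4 : (((k * m : ℕ) : ℝ) + 1) ^ K ≤ ((m + 2 : ℝ) * (k + 1)) ^ K := by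
            gcongr; push_cast; nlinarith
          rw [mul_pow] at h3 h4
          have h5 := mul_le_mul_of_nonneg_left h3 hC'0
          have h6 := mul_le_mul_of_nonneg_left h4 hC'0
          have h7 : 0 ≤ (|Real.log b| + |Real.log c0|) * (k + 1 : ℝ) ^ K := by positivity
          nlinarith
      · intro q
        obtain ⟨A, hA⟩ := exists_poly_bound θ hθ0 hθ1 q
        refine ⟨b / c0 * A, fun k t => ?_⟩
        rw [Real.norm_eq_abs]
        refine (hlogdiff _ _ (hr1 t _) (hr1 t _)).trans ?_
        have h1 := hr3 t k ((k + 1) * m) (k * m) (by nlinarith) le_rfl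
        calc |rat ((k + 1) * m) t - rat (k * m) t| / c0 ≤ b * θ ^ k / c0 := by gcongr
          _ = b / c0 * θ ^ k := by ring
          _ ≤ b / c0 * (A / (k + 1 : ℝ) ^ q) := by gcongr; exact hA k
          _ = _ := by ring
      · intro t
        exact (hlogt t).comp (tendsto_id.atTop_mul_const' (by omega))
    have : ρ = fun t => Real.exp (Real.log (ρ t)) := funext fun t => (Real.exp_log (hρpos t)).symm
    rw [this]
    exact Real.contDiff_exp.comp hsm
  · have := (hlogt t).cesaro
    refine this.congr fun n => ?_
    have : ∑ i ∈ Finset.range n, Real.log (rat i t) = Real.log (ifsU ψ φ n t 0) := by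
      induction n with
      | zero => simp [ifsU]
      | succ n ih => rw [Finset.sum_range_succ, ih, hratlog]; ring
    rw [this, div_eq_inv_mul]

/-! ### Identification of the pressure -/

/-- A circle map with lift `T`, inverse lift `S`, and potential `G`. -/
structure CircSys (lam L : ℝ) (d : ℤ) (T S G : ℝ → ℝ) : Prop where
  hlam0 : 0 ≤ lam
  hlam1 : lam < 1
  hL : 0 ≤ L
  hd : d ≠ 0
  TS : ∀ y, T (S y) = y
  ST : ∀ x, S (T x) = x
  lipS : ∀ y y', |S y - S y'| ≤ lam * |y - y'|
  hT : ∀ x, T (x + 1) = T x + d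
  lipG : ∀ x x', |G x - G x'| ≤ L * |x - x'|
  hG : ∀ x, G (x + 1) = G x

/-- Preimages in the fundamental domain. -/
def preSet (T : ℝ → ℝ) (n : ℕ) (c : ℤ) (y : ℝ) : Set ℝ :=
  {x | x ∈ Set.Ico (0:ℝ) 1 ∧ ∃ k : ℤ, T^[n] x = c * x + y + k}

section
variable {lam L : ℝ} {d : ℤ} {T S G : ℝ → ℝ}

lemma CircSys.T_int (H : CircSys lam L d T S G) (x : ℝ) (j : ℤ) : T (x + j) = T x + d * j := by
  induction j using Int.induction_on with
  | zero => simp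
  | succ j ih =>
    have := H.hT (x + j)
    push_cast at ih ⊢
    rw [← add_assoc, this, ih]; ring
  | pred j ih =>
    have := H.hT (x + ((-(j:ℤ) - 1 : ℤ) : ℝ))
    push_cast at ih this ⊢
    rw [show x + (-(j:ℝ) - 1) + 1 = x + -(j:ℝ) by ring, ih] at this
    linarith

lemma CircSys.G_int (H : CircSys lam L d T S G) (x : ℝ) (j : ℤ) : G (x + j) = G x := by
  have := (show Function.Periodic G 1 from H.hG).int_mul j x
  simpa using this

lemma CircSys.S_int (H : CircSys lam L d T S G) (y : ℝ) (j : ℤ) : S (y + d * j) = S y + j := by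
  have := H.T_int (S y) j
  rw [H.TS] at this
  rw [← this, H.ST]

lemma CircSys.Tn_int (H : CircSys lam L d T S G) (n : ℕ) (x : ℝ) (j : ℤ) :
    T^[n] (x + j) = T^[n] x + (d ^ n * j : ℤ) := by
  induction n with
  | zero => simp
  | succ n ih =>
    rw [Function.iterate_succ_apply', ih, H.T_int, Function.iterate_succ_apply']
    push_cast; ring

lemma CircSys.birk_int (H : CircSys lam L d T S G) (n : ℕ) (x : ℝ) (j : ℤ) :
    birkhoff T G n (x + j) = birkhoff T G n x := by
  unfold birkhoff
  refine Finset.sum_congr rfl fun i _ => ?_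
  rw [H.Tn_int, H.G_int]

lemma CircSys.lipSn (H : CircSys lam L d T S G) (n : ℕ) (y y' : ℝ) :
    |S^[n] y - S^[n] y'| ≤ lam ^ n * |y - y'| := by
  induction n with
  | zero => simp
  | succ n ih =>
    rw [Function.iterate_succ_apply', Function.iterate_succ_apply']
    refine (H.lipS _ _).trans ?_
    have := mul_le_mul_of_nonneg_left ih H.hlam0
    rw [pow_succ']; linarith

lemma CircSys.preSet_succ (H : CircSys lam L d T S G) (n : ℕ) (y : ℝ) :
    preSet T (n + 1) 0 y = ⋃ i : Fin d.natAbs, preSet T n 0 (S (y + i)) := by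
  ext x
  simp only [preSet, Set.mem_ofPred_eq, Set.mem_iUnion, Function.iterate_succ_apply', Int.cast_zero,
    zero_mul, zero_add]
  constructor
  · rintro ⟨hx, k, hk⟩
    have h0 : 0 ≤ k % d := Int.emod_nonneg _ H.hd
    have h1 : k % d < |d| := Int.emod_lt_abs _ H.hd
    rw [Int.abs_eq_natAbs] at h1
    refine ⟨⟨(k % d).toNat, by omega⟩, hx, k / d, ?_⟩
    have h2 : (((k % d).toNat : ℕ) : ℝ) = ((k % d : ℤ) : ℝ) := by
      exact_mod_cast Int.toNat_of_nonneg h0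
    have h3 : (k : ℝ) = ((k % d : ℤ) : ℝ) + d * ((k / d : ℤ) : ℝ) := by
      exact_mod_cast (Int.emod_add_mul_ediv k d).symm
    have h4 : T^[n] x = S (y + k) := by rw [← hk, H.ST]
    rw [h4, h3, ← add_assoc, H.S_int]
    simp only [h2]
  · rintro ⟨i, hx, k, hk⟩
    refine ⟨hx, i + d * k, ?_⟩
    rw [hk, H.T_int, H.TS]; push_cast; ring

lemma CircSys.preSet_disj (H : CircSys lam L d T S G) (n : ℕ) (y : ℝ) :
    Pairwise (Function.onFun Disjoint fun i : Fin d.natAbs => preSet T n 0 (S (y + i))) := by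
  intro i j hij
  refine Set.disjoint_left.2 ?_
  rintro x ⟨_, k, hk⟩ ⟨_, k', hk'⟩
  apply hij
  have h1 : S (y + i) + k = S (y + j) + k' := by
    simp only [Int.cast_zero, zero_mul, zero_add] at hk hk'
    rw [← hk, ← hk']
  have h2 := congrArg T h1
  rw [H.T_int, H.T_int, H.TS, H.TS] at h2
  have h3 : ((i : ℕ) : ℤ) + d * k = (j : ℕ) + d * k' := by
    have : ((i : ℕ) : ℝ) + d * k = (j : ℕ) + d * k' := by linarith
    exact_mod_cast this
  have h4 : d ∣ ((i : ℕ) : ℤ) - (j : ℕ) := ⟨k' - k, by linarith⟩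
  have h5 : ((i : ℕ) : ℤ) - (j : ℕ) = 0 := by
    apply Int.eq_zero_of_abs_lt_dvd ((abs_dvd _ _).2 h4)
    have := i.2; have := j.2
    rw [Int.abs_eq_natAbs d, abs_lt]
    constructor <;> omega
  ext
  omega

lemma CircSys.q_eq (H : CircSys lam L d T S G) (n : ℕ) : ∀ y, (preSet T n 0 y).Finite ∧
    ∑ᶠ x ∈ preSet T n 0 y, Real.exp (birkhoff T G n x) =
      opU (fun (i : Fin d.natAbs) y => S (y + i)) (fun (i : Fin d.natAbs) y => G (S (y + i))) n y := by
  have : Nonempty (Fin d.natAbs) := ⟨⟨0, Int.natAbs_pos.2 H.hd⟩⟩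
  induction n with
  | zero =>
    intro y
    have e : preSet T 0 0 y = {Int.fract y} := by
      ext x
      simp only [preSet, Set.mem_ofPred_eq, Set.mem_singleton_iff, Function.iterate_zero, id,
        Int.cast_zero, zero_mul, zero_add]
      constructor
      · rintro ⟨hx, k, hk⟩
        have : Int.fract x = Int.fract y := by rw [hk]; simp
        rw [← this]
        exact (Int.fract_eq_self.2 hx).symm
      · rintro rfl
        refine ⟨⟨Int.fract_nonneg y, Int.fract_lt_one y⟩, -⌊y⌋, ?_⟩
        push_cast
        have := Int.floor_add_fract y
        linarith
    rw [e]
    refine ⟨Set.finite_singleton _, ?_⟩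
    rw [finsum_mem_singleton]
    simp [birkhoff, opU]
  | succ n ih =>
    intro y
    rw [H.preSet_succ]
    have hfin : ∀ i : Fin d.natAbs, (preSet T n 0 (S (y + i))).Finite := fun i => (ih _).1
    refine ⟨Set.finite_iUnion hfin, ?_⟩
    rw [finsum_mem_iUnion (H.preSet_disj n y) hfin, finsum_eq_sum_of_fintype, opU_succ]
    simp only [opL]
    refine Finset.sum_congr rfl fun i _ => ?_
    rw [← (ih (S (y + i))).2, ← smul_eq_mul, smul_finsum_mem (hfin i)]
    refine finsum_mem_congr rfl fun x hx => ?_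
    obtain ⟨_, k, hk⟩ := hx
    simp only [Int.cast_zero, zero_mul, zero_add] at hk
    have : birkhoff T G (n + 1) x = birkhoff T G n x + G (S (y + i)) := by
      unfold birkhoff
      rw [Finset.sum_range_succ, hk, H.G_int]
    rw [this, Real.exp_add, smul_eq_mul, mul_comm]

lemma CircSys.fix (H : CircSys lam L d T S G) (n : ℕ) (hn : 1 ≤ n) (c k : ℤ) (hc0 : 0 ≤ c)
    (hc1 : c ≤ 1) : ∃ p : ℝ, p = S^[n] (c * p + k) := by
  have hlam0 := H.hlam0
  have hlip : ∀ p q : ℝ, |S^[n] (c * p + k) - S^[n] (c * q + k)| ≤ lam * |p - q| := by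
    intro p q
    refine (H.lipSn n _ _).trans ?_
    have h1 : |(c * p + k : ℝ) - (c * q + k)| ≤ |p - q| := by
      rw [show (c * p + k : ℝ) - (c * q + k) = c * (p - q) by ring, abs_mul]
      have : |(c:ℝ)| ≤ 1 := by
        rw [abs_of_nonneg (by exact_mod_cast hc0)]; exact_mod_cast hc1
      nlinarith [abs_nonneg (p - q)]
    have h2 : lam ^ n ≤ lam := pow_le_of_le_one hlam0 H.hlam1.le (by omega)
    exact mul_le_mul h2 h1 (abs_nonneg _) hlam0
  have hcw : ContractingWith ⟨lam, hlam0⟩ (fun p : ℝ => S^[n] (c * p + k)) := by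
    refine ⟨?_, LipschitzWith.of_dist_le_mul fun p q => ?_⟩
    · exact_mod_cast H.hlam1
    · rw [Real.dist_eq, Real.dist_eq]; exact hlip p q
  exact ⟨hcw.fixedPoint, hcw.fixedPoint_isFixedPt.symm⟩

lemma CircSys.compare (H : CircSys lam L d T S G) : ∃ M : ℝ, 0 < M ∧
    ∀ n, 1 ≤ n → ∀ c c' : ℤ, 0 ≤ c → c ≤ 1 → 0 ≤ c' → c' ≤ 1 → (preSet T n c' 0).Finite →
      (preSet T n c 0).Finite ∧ ∑ᶠ x ∈ preSet T n c 0, Real.exp (birkhoff T G n x) ≤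
        M * ∑ᶠ x ∈ preSet T n c' 0, Real.exp (birkhoff T G n x) := by
  have hlam0 := H.hlam0
  have hlam1 := H.hlam1
  have hL := H.hL
  have h1l : 0 < 1 - lam := by linarith
  set δ := 2 * lam / (1 - lam) with hδ
  have hδ0 : 0 ≤ δ := by positivity
  set b := L * ((δ + 2) / (1 - lam)) with hb
  set J : Finset ℤ := Finset.Icc ⌊-δ⌋ ⌊1 + δ⌋ with hJ
  refine ⟨Real.exp b * (J.card + 1), by positivity, ?_⟩
  intro n hn c c' hc0 hc1 hc0' hc1' hfin
  have hex : ∀ x : ℝ, ∃ p : ℝ, x ∈ preSet T n c 0 → ∃ k : ℤ, x = S^[n] (c * x + k) ∧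
      p = S^[n] (c' * p + k) := by
    intro x
    by_cases hx : x ∈ preSet T n c 0
    · obtain ⟨hx1, k, hk⟩ := hx
      obtain ⟨p, hp⟩ := H.fix n hn c' k hc0' hc1'
      refine ⟨p, fun _ => ⟨k, ?_, hp⟩⟩
      rw [add_zero] at hk
      rw [← hk]
      exact ((show Function.LeftInverse S T from H.ST).iterate n x).symm
    · exact ⟨0, fun h => absurd h hx⟩
  choose p hp using hex
  have hTp : ∀ i ≤ n, ∀ q z : ℝ, q = S^[n] z → T^[i] q = S^[n - i] z := by
    intro i hi q z hq
    rw [hq]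
    have : n = i + (n - i) := by omega
    conv_lhs => rw [this, Function.iterate_add_apply]
    exact (show Function.LeftInverse T S from H.TS).iterate i _
  have hcabs : ∀ e : ℤ, 0 ≤ e → e ≤ 1 → |(e:ℝ)| ≤ 1 := fun e h0 h1 => by
    rw [abs_of_nonneg (by exact_mod_cast h0)]; exact_mod_cast h1
  have hdist0 : ∀ x ∈ preSet T n c 0, |p x - x| ≤ δ ∧ |c' * p x - c * x| ≤ δ + 2 := by
    intro x hx
    obtain ⟨k, h1, h2⟩ := hp x hx
    have hx1 : |x| ≤ 1 := by
      have := hx.1.1; have := hx.1.2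
      rw [abs_le]; constructor <;> linarith
    have h4 : |(c' * p x - c * x : ℝ)| ≤ |p x - x| + 2 := by
      have e1 := abs_sub (c' * p x : ℝ) (c * x)
      rw [abs_mul, abs_mul] at e1
      have e2 := hcabs c hc0 hc1
      have e3 := hcabs c' hc0' hc1'
      have e4 : |p x| ≤ |p x - x| + |x| := by
        have := abs_add_le (p x - x) x
        simpa using this
      nlinarith [abs_nonneg (p x), abs_nonneg x]
    have h3 : |p x - x| ≤ lam * |(c' * p x - c * x : ℝ)| := by
      have e1 := H.lipSn n (c' * p x + k) (c * x + k)
      rw [← h1, ← h2] at e1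
      refine e1.trans ?_
      rw [show (c' * p x + k - (c * x + k) : ℝ) = c' * p x - c * x by ring]
      exact mul_le_mul_of_nonneg_right (pow_le_of_le_one hlam0 hlam1.le (by omega)) (abs_nonneg _)
    have h5 : |p x - x| ≤ δ := by
      rw [hδ, le_div_iff₀ h1l]
      nlinarith
    exact ⟨h5, by linarith⟩
  have hbirk : ∀ x ∈ preSet T n c 0, birkhoff T G n x ≤ birkhoff T G n (p x) + b := by
    intro x hx
    obtain ⟨k, h1, h2⟩ := hp x hx
    have h3 := (hdist0 x hx).2
    have h4 : birkhoff T G n x - birkhoff T G n (p x) ≤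
        ∑ i ∈ Finset.range n, L * (lam ^ (n - 1 - i) * (δ + 2)) := by
      unfold birkhoff
      rw [← Finset.sum_sub_distrib]
      refine Finset.sum_le_sum fun i hi => ?_
      have hi := Finset.mem_range.1 hi
      refine (le_abs_self _).trans ((H.lipG _ _).trans ?_)
      rw [hTp i hi.le _ _ h1, hTp i hi.le _ _ h2]
      refine mul_le_mul_of_nonneg_left ?_ hL
      refine (H.lipSn _ _ _).trans ?_
      rw [abs_sub_comm, show (c' * p x + k - (c * x + k) : ℝ) = c' * p x - c * x by ring]
      exact mul_le_mul (pow_le_pow_of_le_one hlam0 hlam1.le (by omega)) h3 (abs_nonneg _)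
        (by positivity)
    have h5 : ∑ i ∈ Finset.range n, lam ^ (n - 1 - i) ≤ 1 / (1 - lam) := by
      rw [Finset.sum_range_reflect (fun i => lam ^ i) n, geom_sum_eq hlam1.ne]
      rw [show (lam ^ n - 1) / (lam - 1) = (1 - lam ^ n) / (1 - lam) by
        rw [← neg_div_neg_eq]; ring_nf]
      gcongr
      have : 0 ≤ lam ^ n := by positivity
      linarith
    rw [← Finset.mul_sum, ← Finset.sum_mul] at h4
    have h6 : L * ((∑ i ∈ Finset.range n, lam ^ (n - 1 - i)) * (δ + 2)) ≤ b := by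
      rw [hb]
      refine mul_le_mul_of_nonneg_left ?_ hL
      rw [div_eq_mul_one_div, mul_comm]
      exact mul_le_mul_of_nonneg_left h5 (by linarith)
    linarith
  set Φ : ℝ → ℝ × ℤ := fun x => (Int.fract (p x), ⌊p x⌋) with hΦ
  have hinj : Set.InjOn Φ (preSet T n c 0) := by
    intro x hx x' hx' he
    have hpp : p x = p x' := by
      rw [← Int.floor_add_fract (p x), ← Int.floor_add_fract (p x')]
      have h1 := congrArg Prod.fst he
      have h2 := congrArg Prod.snd he
      simp only [hΦ] at h1 h2
      rw [h1, h2]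
    obtain ⟨k, h1, h2⟩ := hp x hx
    obtain ⟨k', h1', h2'⟩ := hp x' hx'
    have e1 := hTp n le_rfl _ _ h2
    have e2 := hTp n le_rfl _ _ h2'
    simp only [Nat.sub_self, Function.iterate_zero, id] at e1 e2
    rw [hpp, e2] at e1
    have hk : (k:ℝ) = k' := by linarith
    have h3 := H.lipSn n (c * x + k) (c * x' + k')
    rw [← h1, ← h1', hk, show (c * x + k' - (c * x' + k') : ℝ) = c * (x - x') by ring, abs_mul] at h3
    have h4 := hcabs c hc0 hc1
    have h5 : lam ^ n ≤ lam := pow_le_of_le_one hlam0 hlam1.le (by omega)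
    have h6 : lam ^ n * (|(c:ℝ)| * |x - x'|) ≤ lam * (1 * |x - x'|) := by
      gcongr
    have h7 : |x - x'| = 0 := by
      have := abs_nonneg (x - x')
      nlinarith
    linarith [abs_eq_zero.1 h7]
  have hmaps : Set.MapsTo Φ (preSet T n c 0) (preSet T n c' 0 ×ˢ (J : Set ℤ)) := by
    intro x hx
    obtain ⟨k, h1, h2⟩ := hp x hx
    have h3 := abs_le.1 (hdist0 x hx).1
    have hx0 := hx.1.1
    have hx1 := hx.1.2
    refine ⟨⟨⟨Int.fract_nonneg _, Int.fract_lt_one _⟩, ?_⟩, ?_⟩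
    · have e1 := hTp n le_rfl _ _ h2
      simp only [Nat.sub_self, Function.iterate_zero, id] at e1
      have e2 := H.Tn_int n (p x) (-⌊p x⌋)
      rw [e1] at e2
      refine ⟨c' * ⌊p x⌋ + k + d ^ n * (-⌊p x⌋), ?_⟩
      have e3 : Φ x = (p x + ((-⌊p x⌋ : ℤ) : ℝ), ⌊p x⌋) := by
        simp only [hΦ]
        rw [← Int.self_sub_floor]; push_cast; rw [sub_eq_add_neg]
      rw [e3]
      simp only
      rw [e2]; push_cast; ring
    · simp only [hΦ, hJ, Finset.coe_Icc, Set.mem_Icc]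
      exact ⟨Int.floor_le_floor (by linarith), Int.floor_le_floor (by linarith)⟩
  have hfinprod : (preSet T n c' 0 ×ˢ (J : Set ℤ)).Finite := hfin.prod J.finite_toSet
  have hfinc : (preSet T n c 0).Finite := hfinprod.of_injOn hmaps hinj
  refine ⟨hfinc, ?_⟩
  rw [finsum_mem_eq_finite_toFinset_sum _ hfinc, finsum_mem_eq_finite_toFinset_sum _ hfin]
  classical
  have s1 : ∑ x ∈ hfinc.toFinset, Real.exp (birkhoff T G n x) ≤
      ∑ x ∈ hfinc.toFinset, Real.exp b * Real.exp (birkhoff T G n (Φ x).1) := by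
    refine Finset.sum_le_sum fun x hx => ?_
    have hx := (Set.Finite.mem_toFinset _).1 hx
    rw [← Real.exp_add]
    apply Real.exp_le_exp.2
    have h1 := hbirk x hx
    have h2 := H.birk_int n (p x) (-⌊p x⌋)
    have e3 : (Φ x).1 = p x + ((-⌊p x⌋ : ℤ) : ℝ) := by
      simp only [hΦ]
      rw [← Int.self_sub_floor]; push_cast; rw [sub_eq_add_neg]
    rw [e3, h2]; linarith
  refine s1.trans ?_
  rw [← Finset.mul_sum]
  have s2 : ∑ x ∈ hfinc.toFinset, Real.exp (birkhoff T G n (Φ x).1) =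
      ∑ w ∈ hfinc.toFinset.image Φ, Real.exp (birkhoff T G n w.1) := by
    rw [Finset.sum_image]
    intro x hx x' hx' he
    exact hinj ((Set.Finite.mem_toFinset _).1 hx) ((Set.Finite.mem_toFinset _).1 hx') he
  have s3 : ∑ w ∈ hfinc.toFinset.image Φ, Real.exp (birkhoff T G n w.1) ≤
      ∑ w ∈ hfin.toFinset ×ˢ J, Real.exp (birkhoff T G n w.1) := by
    refine Finset.sum_le_sum_of_subset_of_nonneg ?_ fun w _ _ => (Real.exp_pos _).le
    intro w hw
    obtain ⟨x, hx, rfl⟩ := Finset.mem_image.1 hw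
    have := hmaps ((Set.Finite.mem_toFinset _).1 hx)
    exact Finset.mem_product.2 ⟨(Set.Finite.mem_toFinset _).2 this.1, this.2⟩
  have s4 : ∑ w ∈ hfin.toFinset ×ˢ J, Real.exp (birkhoff T G n w.1) =
      J.card * ∑ x ∈ hfin.toFinset, Real.exp (birkhoff T G n x) := by
    rw [Finset.sum_product]
    simp only [Finset.sum_const, nsmul_eq_mul]
    rw [Finset.mul_sum]
  have s5 : 0 ≤ ∑ x ∈ hfin.toFinset, Real.exp (birkhoff T G n x) :=
    Finset.sum_nonneg fun _ _ => (Real.exp_pos _).le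
  rw [s2, mul_assoc]
  refine mul_le_mul_of_nonneg_left ?_ (Real.exp_pos _).le
  linarith

theorem CircSys.pressure (H : CircSys lam L d T S G) {ρ : ℝ} (hρ : 0 < ρ)
    (ht : Tendsto (fun n : ℕ => Real.log (opU (fun (i : Fin d.natAbs) y => S (y + i))
      (fun (i : Fin d.natAbs) y => G (S (y + i))) n 0) / n) atTop (𝓝 (Real.log ρ))) :
    Real.exp (pressureExp T G) = ρ := by
  have : Nonempty (Fin d.natAbs) := ⟨⟨0, Int.natAbs_pos.2 H.hd⟩⟩
  obtain ⟨M, hM, hcmp⟩ := H.compare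
  set q : ℕ → ℝ := fun n => opU (fun (i : Fin d.natAbs) y => S (y + i))
      (fun (i : Fin d.natAbs) y => G (S (y + i))) n 0 with hq
  have hqpos : ∀ n, 0 < q n := fun n => opU_pos n 0
  have hper : ∀ n, periodicPtsIn T n = preSet T n 1 0 := fun n => by
    simp [periodicPtsIn, preSet]
  set Z : ℕ → ℝ := fun n => ∑ᶠ x ∈ periodicPtsIn T n, Real.exp (birkhoff T G n x) with hZ
  have hZ1 : ∀ n, 1 ≤ n → Z n ≤ M * q n ∧ q n ≤ M * Z n := fun n hn => by
    obtain ⟨hf, he⟩ := H.q_eq n 0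
    have h1 := hcmp n hn 1 0 (by norm_num) le_rfl le_rfl (by norm_num) hf
    have h2 := hcmp n hn 0 1 le_rfl (by norm_num) (by norm_num) le_rfl h1.1
    rw [he, ← hper] at h1 h2
    exact ⟨h1.2, h2.2⟩
  have hlim : Tendsto (fun n : ℕ => Real.log (Z n) / n) atTop (𝓝 (Real.log ρ)) := by
    have hd : Tendsto (fun n : ℕ => |Real.log M| / n) atTop (𝓝 0) :=
      tendsto_const_div_atTop_nhds_zero_nat _
    have hdiff : Tendsto (fun n : ℕ => Real.log (Z n) / n - Real.log (q n) / n) atTop (𝓝 0) := by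
      refine squeeze_zero_norm' ?_ hd
      filter_upwards [eventually_ge_atTop 1] with n hn
      obtain ⟨h1, h2⟩ := hZ1 n hn
      have hq0 := hqpos n
      have hZ0 : 0 < Z n := by
        by_contra h
        push Not at h
        nlinarith
      have e1 := Real.log_le_log hZ0 h1
      have e2 := Real.log_le_log hq0 h2
      rw [Real.log_mul hM.ne' hq0.ne'] at e1
      rw [Real.log_mul hM.ne' hZ0.ne'] at e2
      rw [← sub_div, Real.norm_eq_abs, abs_div, Nat.abs_cast]
      refine div_le_div_of_nonneg_right ?_ (Nat.cast_nonneg n)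
      rw [abs_le]
      have := le_abs_self (Real.log M)
      constructor <;> linarith
    have h3 := hdiff.add ht
    rw [zero_add] at h3
    refine h3.congr fun n => ?_
    simp only [hq]
    ring
  have : pressureExp T G = Real.log ρ := hlim.limsup_eq
  rw [this, Real.exp_log hρ]

end

/-! ### Joint smoothness from smoothness with values in function spaces -/

/-- Integration from `0` to `x` as a continuous linear functional. -/
def IntC (x : ℝ) : BoundedContinuousFunction ℝ ℝ →L[ℝ] ℝ :=
  LinearMap.mkContinuous
    { toFun := fun f => ∫ s in (0:ℝ)..x, f s
      map_add' := fun f g => by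
        simp only [BoundedContinuousFunction.coe_add, Pi.add_apply]
        exact intervalIntegral.integral_add (f.continuous.intervalIntegrable _ _)
          (g.continuous.intervalIntegrable _ _)
      map_smul' := fun c f => by
        simp [intervalIntegral.integral_const_mul] } |x| fun f => by
    have := intervalIntegral.norm_integral_le_of_norm_le_const (a := 0) (b := x) (f := f)
      (C := ‖f‖) fun s _ => f.norm_coe_le_norm s
    simpa [mul_comm] using this

lemma IntC_apply (x : ℝ) (f : (BoundedContinuousFunction ℝ ℝ)) : IntC x f = ∫ s in (0:ℝ)..x, f s := rfl

lemma IntC_sub_le (x x' : ℝ) : ‖IntC x - IntC x'‖ ≤ |x - x'| := by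
  refine ContinuousLinearMap.opNorm_le_bound _ (abs_nonneg _) fun f => ?_
  have e : (IntC x - IntC x') f = ∫ s in x'..x, f s := by
    show IntC x f - IntC x' f = _
    rw [IntC_apply, IntC_apply]
    exact intervalIntegral.integral_interval_sub_left (f.continuous.intervalIntegrable _ _)
      (f.continuous.intervalIntegrable _ _)
  rw [e, mul_comm]
  exact intervalIntegral.norm_integral_le_of_norm_le_const fun s _ => f.norm_coe_le_norm s

lemma IntC_continuous : Continuous IntC := by
  refine LipschitzWith.continuous (f := IntC) (K := 1) (LipschitzWith.of_dist_le_mul fun x x' => ?_)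
  rw [dist_eq_norm, Real.dist_eq]
  simpa using IntC_sub_le x x'

section
variable {P : Type*} [NormedAddCommGroup P] [NormedSpace ℝ P] [FiniteDimensional ℝ P]

lemma joint_smooth {U : Set P} (hU : IsOpen U) : ∀ (K : ℕ) (c : P → ℝ) (Φ : ℕ → P → (BoundedContinuousFunction ℝ ℝ)),
    ContDiffOn ℝ K c U → (∀ j ≤ K, ContDiffOn ℝ K (Φ j) U) →
    (∀ j < K, ∀ t ∈ U, ∀ x, Φ j t x = Φ j t 0 + IntC x (Φ (j + 1) t)) →
    ContDiffOn ℝ K (fun p : P × ℝ => c p.1 + IntC p.2 (Φ 0 p.1)) (U ×ˢ univ) := by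
  intro K
  induction K with
  | zero =>
    intro c Φ hc hΦ _
    have h0 := (hΦ 0 le_rfl).continuousOn
    have hc0 := hc.continuousOn
    refine contDiffOn_zero.2 ?_
    have m1 : MapsTo (Prod.fst : P × ℝ → P) (U ×ˢ univ) U := fun p hp => hp.1
    exact (hc0.comp continuousOn_fst m1).add
      ((IntC_continuous.comp_continuousOn continuousOn_snd).clm_apply (h0.comp continuousOn_fst m1))
  | succ K ih =>
    intro c Φ hc hΦ hrel
    have hK1 : ((K + 1 : ℕ) : WithTop ℕ∞) = (K : WithTop ℕ∞) + 1 := by push_cast; rfl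
    have hne : ((K + 1 : ℕ) : WithTop ℕ∞) ≠ 0 := by exact_mod_cast Nat.succ_ne_zero K
    have hKle : (K : WithTop ℕ∞) ≤ ((K + 1 : ℕ) : WithTop ℕ∞) := by exact_mod_cast Nat.le_succ K
    have hopen : IsOpen (U ×ˢ (univ : Set ℝ)) := hU.prod isOpen_univ
    have hcd : ∀ t ∈ U, HasFDerivAt c (fderiv ℝ c t) t := fun t ht =>
      ((hc.differentiableOn hne).differentiableAt (hU.mem_nhds ht)).hasFDerivAt
    have hΦd : ∀ j ≤ K + 1, ∀ t ∈ U, HasFDerivAt (Φ j) (fderiv ℝ (Φ j) t) t := fun j hj t ht =>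
      (((hΦ j hj).differentiableOn hne).differentiableAt (hU.mem_nhds ht)).hasFDerivAt
    have hcf : ContDiffOn ℝ K (fderiv ℝ c) U := hc.fderiv_of_isOpen hU (by rw [hK1])
    have hΦf : ∀ j ≤ K + 1, ContDiffOn ℝ K (fderiv ℝ (Φ j)) U := fun j hj =>
      (hΦ j hj).fderiv_of_isOpen hU (by rw [hK1])
    rw [hK1, contDiffOn_succ_iff_hasFDerivWithinAt_of_uniqueDiffOn hopen.uniqueDiffOn]
    refine ⟨fun h => absurd h (by simp), fun p =>
      (fderiv ℝ c p.1 + (IntC p.2).comp (fderiv ℝ (Φ 0) p.1)).coprod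
        (ContinuousLinearMap.toSpanSingleton ℝ (Φ 0 p.1 p.2)), ?_, ?_⟩
    · rw [contDiffOn_clm_apply]
      rintro ⟨e, h⟩
      have h1 := ih (fun t => fderiv ℝ c t e) (fun j t => fderiv ℝ (Φ j) t e)
        (hcf.clm_apply contDiffOn_const) (fun j hj => (hΦf j (by omega)).clm_apply contDiffOn_const)
        (by
          intro j hj t ht x
          have a1 := (BoundedContinuousFunction.evalCLM ℝ x).hasFDerivAt.comp t
            (hΦd j (by omega) t ht)
          have a2 := (BoundedContinuousFunction.evalCLM ℝ (0:ℝ)).hasFDerivAt.comp t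
            (hΦd j (by omega) t ht)
          have a3 := (IntC x).hasFDerivAt.comp t (hΦd (j + 1) (by omega) t ht)
          have a4 := (a2.add a3).congr_of_eventuallyEq
            (f₁ := (BoundedContinuousFunction.evalCLM ℝ x : (BoundedContinuousFunction ℝ ℝ) →L[ℝ] ℝ) ∘ Φ j) (by
              filter_upwards [hU.mem_nhds ht] with s hs
              exact hrel j (by omega) s hs x)
          have a5 := a1.unique a4
          exact DFunLike.congr_fun a5 e)
      have h20 : ContDiffOn ℝ K ((BoundedContinuousFunction.evalCLM ℝ (0:ℝ) : (BoundedContinuousFunction ℝ ℝ) →L[ℝ] ℝ) ∘ Φ 0)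
          U := (BoundedContinuousFunction.evalCLM ℝ (0:ℝ)).contDiff.comp_contDiffOn
          ((hΦ 0 (by omega)).of_le hKle)
      have h2 := ih (fun t => Φ 0 t 0) (fun j t => Φ (j + 1) t) h20
        (fun j hj => (hΦ (j + 1) (by omega)).of_le hKle)
        (fun j hj t ht x => hrel (j + 1) (by omega) t ht x)
      have h3 : ContDiffOn ℝ K (fun p : P × ℝ => Φ 0 p.1 p.2) (U ×ˢ univ) :=
        h2.congr fun p hp => hrel 0 (by omega) p.1 hp.1 p.2
      refine (h1.add (contDiffOn_const (c := h) |>.mul h3)).congr fun p hp => ?_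
      simp [ContinuousLinearMap.coprod_apply]
    · rintro ⟨t, x⟩ ⟨ht, -⟩
      have ev : ∀ᶠ v in 𝓝 ((t, x) : P × ℝ), v.1 ∈ U :=
        continuous_fst.continuousAt.eventually_mem (hU.mem_nhds ht)
      have hΦc : ContinuousAt (Φ 0) t := (hΦd 0 (by omega) t ht).continuousAt
      have key := hasStrictFDerivAt_uncurry_coprod (𝕜 := ℝ) (u := ((t, x) : P × ℝ))
        (f := fun t x => c t + IntC x (Φ 0 t))
        (f₁ := fun t x => fderiv ℝ c t + (IntC x).comp (fderiv ℝ (Φ 0) t))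
        (f₂ := fun t x => ContinuousLinearMap.toSpanSingleton ℝ (Φ 0 t x)) ?_ ?_ ?_ ?_
      · exact key.hasFDerivAt.hasFDerivWithinAt
      · filter_upwards [ev] with v hv
        exact (hcd _ hv).add ((IntC v.2).hasFDerivAt.comp v.1 (hΦd 0 (by omega) _ hv))
      · refine Eventually.of_forall fun v => ?_
        have h := intervalIntegral.integral_hasDerivAt_right (a := 0) (b := v.2)
          (f := Φ 0 v.1) ((Φ 0 v.1).continuous.intervalIntegrable _ _)
          ((Φ 0 v.1).continuous.stronglyMeasurableAtFilter _ _) (Φ 0 v.1).continuous.continuousAt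
        exact (h.hasFDerivAt).const_add (c v.1)
      · have c1 : ContinuousAt (fderiv ℝ c) t := hcf.continuousOn.continuousAt (hU.mem_nhds ht)
        have c2 : ContinuousAt (fderiv ℝ (Φ 0)) t :=
          (hΦf 0 (by omega)).continuousOn.continuousAt (hU.mem_nhds ht)
        have c1' : ContinuousAt (fun p : P × ℝ => fderiv ℝ c p.1) (t, x) :=
          ContinuousAt.comp (f := Prod.fst) (x := ((t, x) : P × ℝ)) c1 continuousAt_fst
        have c2' : ContinuousAt (fun p : P × ℝ => fderiv ℝ (Φ 0) p.1) (t, x) :=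
          ContinuousAt.comp (f := Prod.fst) (x := ((t, x) : P × ℝ)) c2 continuousAt_fst
        have c3 : ContinuousAt (fun p : P × ℝ => IntC p.2) (t, x) :=
          (IntC_continuous.comp continuous_snd).continuousAt
        exact c1'.add (c3.clm_comp c2')
      · have c1 : ContinuousAt (fun p : P × ℝ => (Φ 0 p.1, p.2)) (t, x) :=
          (ContinuousAt.comp (f := Prod.fst) (x := ((t, x) : P × ℝ)) hΦc continuousAt_fst).prodMk
            continuousAt_snd
        have c2 : ContinuousAt (fun p : P × ℝ => Φ 0 p.1 p.2) (t, x) :=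
          ContinuousAt.comp (g := fun q : (BoundedContinuousFunction ℝ ℝ) × ℝ => q.1 q.2) continuous_eval.continuousAt c1
        exact (ContinuousLinearMap.toSpanSingletonCLE (𝕜 := ℝ) (E := ℝ)).continuous.continuousAt.comp c2

end

lemma toBCF_apply {u : ℝ → ℝ} (hc : Continuous u) (hp : Function.Periodic u 1) (x : ℝ) :
    toBCF u x = u x := by
  have hb : ∃ C, ∀ x y, dist (u x) (u y) ≤ C := by
    have h := (hp.compact_of_continuous one_ne_zero hc).isBounded
    obtain ⟨C, hC⟩ := Metric.isBounded_iff.1 h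
    exact ⟨C, fun x y => hC (mem_range_self x) (mem_range_self y)⟩
  unfold toBCF
  rw [dif_pos ⟨hc, hb⟩]
  rfl

lemma periodic_iteratedDeriv {u : ℝ → ℝ} (hp : Function.Periodic u 1) (j : ℕ) :
    Function.Periodic (iteratedDeriv j u) 1 := by
  intro x
  have h := iteratedDeriv_comp_add_const j u 1
  have h2 : (fun z => u (z + 1)) = u := funext hp
  rw [h2] at h
  exact (congrFun h x).symm

section
variable {P : Type*} [NormedAddCommGroup P] [NormedSpace ℝ P]

lemma fam_rel {f : ℝ → ℝ} {K : ℕ} (hf : ContDiff ℝ (K + 1 : ℕ) f)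
    (hp : Function.Periodic (deriv f) 1) (j : ℕ) (hj : j ≤ K) (x : ℝ) :
    iteratedDeriv j f x = iteratedDeriv j f 0 + IntC x (toBCF (iteratedDeriv (j + 1) f)) := by
  have hc : ∀ i ≤ K + 1, Continuous (iteratedDeriv i f) := fun i hi =>
    hf.continuous_iteratedDeriv i (by exact_mod_cast hi)
  have hper : Function.Periodic (iteratedDeriv (j + 1) f) 1 := by
    rw [iteratedDeriv_succ']; exact periodic_iteratedDeriv hp j
  have e : ∀ s, toBCF (iteratedDeriv (j + 1) f) s = iteratedDeriv (j + 1) f s :=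
    toBCF_apply (hc (j + 1) (by omega)) hper
  rw [IntC_apply]
  simp only [e]
  have hd : Differentiable ℝ (iteratedDeriv j f) :=
    hf.differentiable_iteratedDeriv j (by exact_mod_cast (by omega : j < K + 1))
  have := intervalIntegral.integral_eq_sub_of_hasDerivAt (a := 0) (b := x)
    (f := iteratedDeriv j f) (f' := iteratedDeriv (j + 1) f)
    (fun s _ => by rw [iteratedDeriv_succ]; exact (hd s).hasDerivAt)
    ((hc (j + 1) (by omega)).intervalIntegrable _ _)
  rw [this]; ring

lemma fam_joint [FiniteDimensional ℝ P] {U : Set P} (hU : IsOpen U) (K : ℕ) (F : P → ℝ → ℝ)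
    (h1 : ∀ t ∈ U, ContDiff ℝ (K + 1 : ℕ) (F t))
    (h2 : ∀ t ∈ U, Function.Periodic (deriv (F t)) 1)
    (h3 : ContDiffOn ℝ K (fun t => F t 0) U)
    (h4 : ∀ j, 1 ≤ j → j ≤ K + 1 → ContDiffOn ℝ K (fun t => toBCF (iteratedDeriv j (F t))) U) :
    ContDiffOn ℝ K (fun p : P × ℝ => F p.1 p.2) (U ×ˢ univ) := by
  have := joint_smooth hU K (fun t => F t 0) (fun j t => toBCF (iteratedDeriv (j + 1) (F t))) h3
    (fun j hj => h4 (j + 1) (by omega) (by omega)) (fun j hj t ht x => by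
      have hc : Continuous (iteratedDeriv (j + 1) (F t)) :=
        (h1 t ht).continuous_iteratedDeriv (j + 1) (by exact_mod_cast (by omega : j + 1 ≤ K + 1))
      have hper : Function.Periodic (iteratedDeriv (j + 1) (F t)) 1 := by
        rw [iteratedDeriv_succ']; exact periodic_iteratedDeriv (h2 t ht) j
      rw [toBCF_apply hc hper, toBCF_apply hc hper]
      exact fam_rel (h1 t ht) (h2 t ht) (j + 1) (by omega) x)
  refine this.congr fun p hp => ?_
  have := fam_rel (h1 p.1 hp.1) (h2 p.1 hp.1) 0 (by omega) p.2
  simpa using this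

lemma inv_smooth [CompleteSpace P] {U : Set P} (hU : IsOpen U) (K : ℕ) (T S : P → ℝ → ℝ) (lam : ℝ)
    (hT : ContDiffOn ℝ K (fun p : P × ℝ => T p.1 p.2) (U ×ˢ univ))
    (hTS : ∀ t ∈ U, ∀ y, T t (S t y) = y) (hST : ∀ t ∈ U, ∀ x, S t (T t x) = x)
    (hlip : ∀ t ∈ U, ∀ y y', |S t y - S t y'| ≤ lam * |y - y'|)
    (hd : ∀ t ∈ U, ∀ x, deriv (T t) x ≠ 0) :
    ContDiffOn ℝ K (fun p : P × ℝ => S p.1 p.2) (U ×ˢ univ) := by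
  have hopen : IsOpen (U ×ˢ (univ : Set ℝ)) := hU.prod isOpen_univ
  have hTc : ContinuousOn (fun p : P × ℝ => T p.1 p.2) (U ×ˢ univ) := hT.continuousOn
  have hSc : ContinuousOn (fun p : P × ℝ => S p.1 p.2) (U ×ˢ univ) := by
    rintro ⟨t, y⟩ ⟨ht, -⟩
    refine ContinuousAt.continuousWithinAt ?_
    have h1 : Tendsto (fun p : P × ℝ => T p.1 (S t y)) (𝓝 (t, y)) (𝓝 y) := by
      have h2 : ContinuousAt (fun p : P × ℝ => T p.1 p.2) (t, S t y) :=
        hTc.continuousAt (hopen.mem_nhds ⟨ht, mem_univ _⟩)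
      have h3 : ContinuousAt (fun p : P × ℝ => ((p.1, S t y) : P × ℝ)) (t, y) := by fun_prop
      have h4 := ContinuousAt.comp (f := fun p : P × ℝ => ((p.1, S t y) : P × ℝ))
        (x := ((t, y) : P × ℝ)) h2 h3
      have h5 : Tendsto (fun p : P × ℝ => T p.1 (S t y)) (𝓝 (t, y)) (𝓝 (T t (S t y))) := h4
      rwa [hTS t ht] at h5
    have h6 : Tendsto (fun p : P × ℝ => lam * |p.2 - T p.1 (S t y)|) (𝓝 (t, y)) (𝓝 0) := by
      have h7 : Tendsto (fun p : P × ℝ => p.2) (𝓝 (t, y)) (𝓝 y) := continuous_snd.continuousAt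
      have := ((h7.sub h1).abs).const_mul lam
      simpa using this
    show Tendsto (fun p : P × ℝ => S p.1 p.2) (𝓝 (t, y)) (𝓝 (S t y))
    rw [tendsto_iff_norm_sub_tendsto_zero]
    refine squeeze_zero' (Eventually.of_forall fun _ => norm_nonneg _) ?_ h6
    have ev : ∀ᶠ v in 𝓝 ((t, y) : P × ℝ), v.1 ∈ U :=
      continuous_fst.continuousAt.eventually_mem (hU.mem_nhds ht)
    filter_upwards [ev] with v hv
    have := hlip v.1 hv v.2 (T v.1 (S t y))
    rwa [hST v.1 hv] at this
  let Ψ : OpenPartialHomeomorph (P × ℝ) (P × ℝ) :=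
    { toFun := fun p => (p.1, T p.1 p.2)
      invFun := fun p => (p.1, S p.1 p.2)
      source := U ×ˢ univ
      target := U ×ˢ univ
      map_source' := fun p hp => ⟨hp.1, mem_univ _⟩
      map_target' := fun p hp => ⟨hp.1, mem_univ _⟩
      left_inv' := fun p hp => by simp [hST p.1 hp.1]
      right_inv' := fun p hp => by simp [hTS p.1 hp.1]
      open_source := hopen
      open_target := hopen
      continuousOn_toFun := continuousOn_fst.prodMk hTc
      continuousOn_invFun := continuousOn_fst.prodMk hSc }
  rcases Nat.eq_zero_or_pos K with rfl | hK
  · exact contDiffOn_zero.2 hSc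
  have hK0 : (K : WithTop ℕ∞) ≠ 0 := by exact_mod_cast (by omega : K ≠ 0)
  rintro ⟨t, y⟩ ⟨ht, hy⟩
  refine ContDiffAt.contDiffWithinAt ?_
  have hmem : ((t, S t y) : P × ℝ) ∈ U ×ˢ (univ : Set ℝ) := ⟨ht, mem_univ _⟩
  have hTat : ContDiffAt ℝ K (fun p : P × ℝ => T p.1 p.2) (t, S t y) :=
    hT.contDiffAt (hopen.mem_nhds hmem)
  have hTd := (hTat.differentiableAt hK0).hasFDerivAt
  set D := fderiv ℝ (fun p : P × ℝ => T p.1 p.2) (t, S t y) with hD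
  have hDb : D (0, 1) ≠ 0 := by
    have h1 : HasFDerivAt (fun z : ℝ => ((t, z) : P × ℝ))
      (ContinuousLinearMap.inr ℝ P ℝ) (S t y) := hasFDerivAt_prodMk_right t (S t y)
    have h2 := HasFDerivAt.comp (S t y) (f := fun z : ℝ => ((t, z) : P × ℝ)) hTd h1
    have h3 := h2.hasDerivAt.deriv
    have h4 := hd t ht (S t y)
    have h5 : deriv (T t) (S t y) = D (0, 1) := by
      simpa using! h3
    rwa [h5] at h4
  have hdec : ∀ (e : P) (h : ℝ), D (e, h) = D (e, 0) + h * D (0, 1) := fun e h => by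
    have : ((e, h) : P × ℝ) = (e, 0) + h • ((0, 1) : P × ℝ) := by simp
    rw [this, map_add, map_smul, smul_eq_mul]
  let A : (P × ℝ) ≃L[ℝ] (P × ℝ) := ContinuousLinearEquiv.equivOfInverse
    ((ContinuousLinearMap.fst ℝ P ℝ).prod D)
    ((ContinuousLinearMap.fst ℝ P ℝ).prod ((D (0, 1))⁻¹ • (ContinuousLinearMap.snd ℝ P ℝ -
      D.comp ((ContinuousLinearMap.inl ℝ P ℝ).comp (ContinuousLinearMap.fst ℝ P ℝ)))))
    (by
      rintro ⟨e, h⟩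
      have := hdec e h
      simp only [ContinuousLinearMap.prod_apply, ContinuousLinearMap.coe_fst',
        smul_apply, sub_apply, ContinuousLinearMap.coe_snd',
        ContinuousLinearMap.comp_apply, ContinuousLinearMap.inl_apply, smul_eq_mul, this]
      congr 1
      field_simp
      ring)
    (by
      rintro ⟨e, h⟩
      simp only [ContinuousLinearMap.prod_apply, ContinuousLinearMap.coe_fst',
        smul_apply, sub_apply, ContinuousLinearMap.coe_snd',
        ContinuousLinearMap.comp_apply, ContinuousLinearMap.inl_apply, smul_eq_mul]
      congr 1
      rw [hdec]
      field_simp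
      ring)
  have hfd : HasFDerivAt Ψ (A : (P × ℝ) →L[ℝ] (P × ℝ)) (Ψ.symm (t, y)) := by
    have := (hasFDerivAt_fst (𝕜 := ℝ) (p := ((t, S t y) : P × ℝ))).prodMk hTd
    exact this
  have hcd : ContDiffAt ℝ K Ψ (Ψ.symm (t, y)) := by
    have : ContDiffAt ℝ K (fun p : P × ℝ => (p.1, T p.1 p.2)) (t, S t y) :=
      contDiffAt_fst.prodMk hTat
    exact this
  have hsym := Ψ.contDiffAt_symm (a := ((t, y) : P × ℝ)) ⟨ht, hy⟩ hfd hcd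
  exact contDiffAt_snd.comp _ hsym

end


/-- Inverse branch of an expanding lift, with its properties. -/
lemma inv_exists {lam : ℝ} (hlam : 0 < lam) {n : ℕ} {T : ℝ → ℝ}
    (hT : IsExpandingLift lam (n + 1) T) :
    ∃ S : ℝ → ℝ, (∀ y, T (S y) = y) ∧ (∀ x, S (T x) = x) ∧
      ∀ y y', |S y - S y'| ≤ lam * |y - y'| := by
  obtain ⟨hc, ⟨d, hd⟩, he⟩ := hT
  have hdiff : Differentiable ℝ T := hc.differentiable (by exact_mod_cast (by omega : n + 1 ≠ 0))
  have hlt : ∀ x x', x < x' → |x' - x| ≤ lam * |T x' - T x| := by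
    intro x x' h
    obtain ⟨c, -, hc'⟩ := exists_deriv_eq_slope T h hdiff.continuous.continuousOn
      hdiff.differentiableOn
    have h1 := he c
    rw [hc', abs_div, le_div_iff₀ (abs_pos.2 (by linarith))] at h1
    calc |x' - x| = lam * (lam⁻¹ * |x' - x|) := by field_simp
      _ ≤ _ := mul_le_mul_of_nonneg_left h1 hlam.le
  have hexp : ∀ x x', |x - x'| ≤ lam * |T x - T x'| := by
    intro x x'
    rcases lt_trichotomy x x' with h | h | h
    · rw [abs_sub_comm x, abs_sub_comm (T x)]; exact hlt _ _ h
    · subst h; simp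
    · exact hlt _ _ h
  have hinj : Function.Injective T := fun x x' h => by
    have := hexp x x'
    rw [h, sub_self, abs_zero, mul_zero] at this
    exact sub_eq_zero.1 (abs_nonpos_iff.1 this)
  have hd0 : d ≠ 0 := by
    rintro rfl
    have := hinj (a₁ := 0 + 1) (a₂ := 0) (by rw [hd]; simp)
    norm_num at this
  have hnat : ∀ (k : ℕ) x, T (x + k) = T x + k * d := by
    intro k
    induction k with
    | zero => intro x; simp
    | succ k ih =>
      intro x
      have : x + ((k + 1 : ℕ) : ℝ) = (x + k) + 1 := by push_cast; ring
      rw [this, hd, ih]; push_cast; ring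
  have htransl : ∀ (k : ℤ) x, T (x + k) = T x + k * d := by
    intro k x
    rcases Int.eq_nat_or_neg k with ⟨m, rfl | rfl⟩
    · simpa using hnat m x
    · have := hnat m (x - m)
      rw [sub_add_cancel] at this
      push_cast
      rw [← sub_eq_add_neg, this]; ring
  have hsurj : Function.Surjective T := by
    intro y
    obtain ⟨k, hk⟩ := exists_nat_ge (|y - T 0|)
    have hdd : (1 : ℝ) ≤ (d : ℝ) * d := by
      have : 1 ≤ d * d := by nlinarith [Int.one_le_abs hd0, abs_mul_abs_self d]
      exact_mod_cast this
    have hk0 : (0 : ℝ) ≤ k := Nat.cast_nonneg k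
    refine mem_range_of_exists_le_of_exists_ge hdiff.continuous ⟨0 + ((-(k * d) : ℤ) : ℝ), ?_⟩
      ⟨0 + ((k * d : ℤ) : ℝ), ?_⟩
    · rw [htransl]; push_cast
      nlinarith [neg_abs_le (y - T 0), mul_le_mul_of_nonneg_left hdd hk0]
    · rw [htransl]; push_cast
      nlinarith [le_abs_self (y - T 0), mul_le_mul_of_nonneg_left hdd hk0]
  choose S hS using hsurj
  refine ⟨S, hS, fun x => hinj (hS _), fun y y' => ?_⟩
  have := hexp (S y) (S y')
  rwa [hS, hS] at this

lemma deriv_periodic_of_lift {T : ℝ → ℝ} {d : ℝ} (h : ∀ x, T (x + 1) = T x + d) :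
    Function.Periodic (deriv T) 1 := by
  intro x
  have h2 : (fun z => T (z + 1)) = fun z => T z + d := funext h
  have := congrArg (fun f => deriv f x) h2
  simpa [deriv_comp_add_const] using this

/-- Uniform bounds for the derivatives of a function that is constant in the parameter
far away. -/
lemma bounds_far {E : Type*} [NormedAddCommGroup E] [NormedSpace ℝ E] [FiniteDimensional ℝ E]
    (K : ℕ) (f : E × ℝ → ℝ) (h : ℝ → ℝ) (hf : ContDiff ℝ K f) (hh : ContDiff ℝ K h)
    (t0 : E) (ρ R : ℝ) (hfar : ∀ t y, ρ < dist t t0 → f (t, y) = h y) :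
    ∃ C, 0 ≤ C ∧ ∀ l, l ≤ K → ∀ t y, |y| ≤ R → ‖iteratedFDeriv ℝ l f (t, y)‖ ≤ C := by
  have : ProperSpace E := FiniteDimensional.proper ℝ E
  have key : ∀ l, ∃ C, 0 ≤ C ∧ (l ≤ K → ∀ t y, |y| ≤ R → ‖iteratedFDeriv ℝ l f (t, y)‖ ≤ C) := by
    intro l
    by_cases hl : l ≤ K
    swap
    · exact ⟨0, le_rfl, fun h => absurd h hl⟩
    set H : E × ℝ → ℝ := fun p => h p.2 with hH
    have hHc : ContDiff ℝ K H := hh.comp contDiff_snd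
    have hl' : ((l : ℕ) : WithTop ℕ∞) ≤ (K : WithTop ℕ∞) := by exact_mod_cast hl
    have hcomp : IsCompact (Metric.closedBall t0 (max ρ 0) ×ˢ Icc (-R) R) :=
      (isCompact_closedBall t0 _).prod isCompact_Icc
    obtain ⟨C1, h1⟩ := hcomp.exists_bound_of_continuousOn
      (hf.continuous_iteratedFDeriv hl').continuousOn
    obtain ⟨C2, h2⟩ := hcomp.exists_bound_of_continuousOn
      (hHc.continuous_iteratedFDeriv hl').continuousOn
    refine ⟨max (max C1 C2) 0, le_max_right _ _, fun _ t y hy => ?_⟩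
    have hy' : y ∈ Icc (-R) R := abs_le.1 hy
    by_cases ht : ρ < dist t t0
    · have e1 : f =ᶠ[𝓝 (t, y)] H := by
        have ev : ∀ᶠ p : E × ℝ in 𝓝 (t, y), ρ < dist p.1 t0 := by
          have hcont : ContinuousAt (fun p : E × ℝ => dist p.1 t0) (t, y) := by fun_prop
          exact hcont.eventually (lt_mem_nhds ht)
        filter_upwards [ev] with p hp
        exact hfar p.1 p.2 hp
      rw [(Filter.EventuallyEq.iteratedFDeriv ℝ e1 l).eq_of_nhds]
      have e2 := iteratedFDeriv_comp_add_right (𝕜 := ℝ) (f := H) l ((t - t0, 0) : E × ℝ) (t0, y)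
      have e3 : (fun z : E × ℝ => H (z + (t - t0, 0))) = H := by
        funext z; simp [hH]
      rw [e3] at e2
      have e4 : ((t0, y) : E × ℝ) + (t - t0, 0) = (t, y) := by simp
      rw [e4] at e2
      rw [← e2]
      exact (h2 (t0, y) ⟨Metric.mem_closedBall_self (le_max_right _ _), hy'⟩).trans
        ((le_max_right _ _).trans (le_max_left _ _))
    · exact (h1 (t, y) ⟨Metric.mem_closedBall.2 ((not_lt.1 ht).trans (le_max_left _ _)), hy'⟩).trans
        ((le_max_left _ _).trans (le_max_left _ _))
  choose C hC0 hC using key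
  refine ⟨∑ l ∈ Finset.range (K + 1), C l, Finset.sum_nonneg fun l _ => hC0 l,
    fun l hl t y hy => (hC l hl t y hy).trans ?_⟩
  exact Finset.single_le_sum (f := C) (fun l _ => hC0 l) (Finset.mem_range.2 (by omega))


lemma local_main {E : Type*} [NormedAddCommGroup E] [NormedSpace ℝ E] [FiniteDimensional ℝ E]
    {U : Set E} (K : ℕ) (T S G : E → ℝ → ℝ) (lam L M0 : ℝ) (d : ℤ) (t0 : E) (ε : ℝ) (hε : 0 < ε)
    (hS : ContDiffOn ℝ K (fun p : E × ℝ => S p.1 p.2) (U ×ˢ univ))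
    (hG : ContDiffOn ℝ K (fun p : E × ℝ => G p.1 p.2) (U ×ˢ univ))
    (hU : Metric.closedBall t0 (2 * ε) ⊆ U)
    (hsys : ∀ t ∈ Metric.closedBall t0 (2 * ε), CircSys lam L d (T t) (S t) (G t))
    (hM0 : ∀ t ∈ Metric.closedBall t0 (2 * ε), |S t 0| ≤ M0) :
    ContDiffAt ℝ (K - 1 : ℕ) (fun t => Real.exp (pressureExp (T t) (G t))) t0 := by
  have ht0 : t0 ∈ Metric.closedBall t0 (2 * ε) := Metric.mem_closedBall_self (by linarith)
  have H0 := hsys t0 ht0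
  have hdpos : 0 < d.natAbs := Int.natAbs_pos.2 H0.hd
  have : Nonempty (Fin d.natAbs) := ⟨⟨0, hdpos⟩⟩
  let χ : ContDiffBump t0 := ⟨ε, 2 * ε, hε, by linarith⟩
  set Θ : E → E := fun t => t0 + χ t • (t - t0) with hΘ
  have hΘs : ContDiff ℝ K Θ := contDiff_const.add (χ.contDiff.smul (contDiff_id.sub contDiff_const))
  have hΘmem : ∀ t, Θ t ∈ Metric.closedBall t0 (2 * ε) := by
    intro t
    rw [Metric.mem_closedBall, dist_eq_norm]
    simp only [hΘ, add_sub_cancel_left, norm_smul, Real.norm_eq_abs, abs_of_nonneg (χ.nonneg)]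
    by_cases h : 2 * ε ≤ dist t t0
    · rw [χ.zero_of_le_dist h]; simp; linarith
    · rw [← dist_eq_norm]
      have h1 : χ t ≤ 1 := χ.le_one
      have := mul_le_mul_of_nonneg_right h1 (dist_nonneg (x := t) (y := t0))
      linarith [not_le.1 h]
  have hΘid : ∀ t ∈ Metric.ball t0 ε, Θ t = t := by
    intro t ht
    have : χ t = 1 := χ.one_of_mem_closedBall (Metric.ball_subset_closedBall ht)
    simp [hΘ, this]
  have hΘfar : ∀ t, 2 * ε < dist t t0 → Θ t = t0 := by
    intro t ht
    have : χ t = 0 := χ.zero_of_le_dist ht.le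
    simp [hΘ, this]
  let ψ : Fin d.natAbs → E × ℝ → ℝ := fun i p => S (Θ p.1) (p.2 + i)
  let φ : Fin d.natAbs → E × ℝ → ℝ := fun i p => G (Θ p.1) (S (Θ p.1) (p.2 + i))
  have hψ : ∀ i, ContDiff ℝ K (ψ i) := by
    intro i
    have h1 : ContDiff ℝ K (fun p : E × ℝ => (Θ p.1, p.2 + (i : ℝ))) :=
      (hΘs.comp contDiff_fst).prodMk (contDiff_snd.add contDiff_const)
    exact contDiffOn_univ.1 (hS.comp h1.contDiffOn fun p _ => ⟨hU (hΘmem _), mem_univ _⟩)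
  have hφ : ∀ i, ContDiff ℝ K (φ i) := by
    intro i
    have h1 : ContDiff ℝ K (fun p : E × ℝ => (Θ p.1, ψ i p)) :=
      (hΘs.comp contDiff_fst).prodMk (hψ i)
    exact contDiffOn_univ.1 (hG.comp h1.contDiffOn fun p _ => ⟨hU (hΘmem _), mem_univ _⟩)
  have hM00 : 0 ≤ M0 := (abs_nonneg _).trans (hM0 t0 ht0)
  have hl1 : 0 < 1 - lam := by linarith [H0.hlam1]
  set R : ℝ := (M0 + d.natAbs) / (1 - lam) + 1 with hR
  have hRpos : 0 < R := by positivity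
  have hRR : M0 + lam * (R + d.natAbs) ≤ R := by
    have h1 : (1 - lam) * (R - 1) = M0 + d.natAbs := by rw [hR]; field_simp; ring
    have h2 : lam * (d.natAbs : ℝ) ≤ d.natAbs := by
      have : (0:ℝ) ≤ d.natAbs := Nat.cast_nonneg _
      nlinarith
    nlinarith
  have hb : ∀ f : Fin d.natAbs → E × ℝ → ℝ, (∀ i, ContDiff ℝ K (f i)) →
      (∀ i t y, 2 * ε < dist t t0 → f i (t, y) = f i (t0, y)) →
      ∃ C, 0 ≤ C ∧ ∀ i l, l ≤ K → ∀ t y, |y| ≤ R → ‖iteratedFDeriv ℝ l (f i) (t, y)‖ ≤ C := by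
    intro f hf hfar
    have : ∀ i, ∃ C, 0 ≤ C ∧ ∀ l, l ≤ K → ∀ t y, |y| ≤ R →
        ‖iteratedFDeriv ℝ l (f i) (t, y)‖ ≤ C := fun i =>
      bounds_far K (f i) (fun y => f i (t0, y)) (hf i)
        ((hf i).comp (contDiff_const.prodMk contDiff_id)) t0 (2 * ε) R (hfar i)
    choose C hC0 hC using this
    refine ⟨∑ i, C i, Finset.sum_nonneg fun i _ => hC0 i, fun i l hl t y hy =>
      (hC i l hl t y hy).trans ?_⟩
    exact Finset.single_le_sum (f := C) (fun i _ => hC0 i) (Finset.mem_univ i)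
  have hΘ0 : Θ t0 = t0 := hΘid t0 (Metric.mem_ball_self hε)
  obtain ⟨C1, hC10, hC1⟩ := hb ψ hψ (fun i t y h => by simp only [ψ, hΘfar t h, hΘ0])
  obtain ⟨C2, hC20, hC2⟩ := hb φ hφ (fun i t y h => by simp only [φ, hΘfar t h, hΘ0])
  have HF : IFSFam K R lam L (max C1 C2) ψ φ :=
    { hR := hRpos
      hlam0 := H0.hlam0
      hlam1 := H0.hlam1
      hL := H0.hL
      hC := hC10.trans (le_max_left _ _)
      hψ := hψ
      hφ := hφ
      maps := fun i t y hy => by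
        have h1 := (hsys _ (hΘmem t)).lipS (y + i) 0
        have h2 := hM0 _ (hΘmem t)
        have h3 : |y + (i : ℝ) - 0| ≤ R + d.natAbs := by
          rw [sub_zero]
          refine (abs_add_le _ _).trans (add_le_add hy ?_)
          rw [abs_of_nonneg (Nat.cast_nonneg _)]
          exact_mod_cast i.2.le
        have h4 := mul_le_mul_of_nonneg_left h3 H0.hlam0
        show |S (Θ t) (y + i)| ≤ R
        have h5 : |S (Θ t) (y + i)| ≤ |S (Θ t) (y + i) - S (Θ t) 0| + |S (Θ t) 0| := by
          have := abs_add_le (S (Θ t) (y + i) - S (Θ t) 0) (S (Θ t) 0)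
          rwa [sub_add_cancel] at this
        linarith
      lipψ := fun i t y y' => by
        have h1 := (hsys _ (hΘmem t)).lipS (y + i) (y' + i)
        rwa [add_sub_add_right_eq_sub] at h1
      lipφ := fun i t y y' => by
        have h1 := (hsys _ (hΘmem t)).lipS (y + i) (y' + i)
        rw [add_sub_add_right_eq_sub] at h1
        have h2 := (hsys _ (hΘmem t)).lipG (S (Θ t) (y + i)) (S (Θ t) (y' + i))
        refine h2.trans (mul_le_mul_of_nonneg_left (h1.trans ?_) H0.hL)
        exact mul_le_of_le_one_left (abs_nonneg _) H0.hlam1.le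
      bψ := fun i l hl t y hy => (hC1 i l hl t y hy).trans (le_max_left _ _)
      bφ := fun i l hl t y hy => (hC2 i l hl t y hy).trans (le_max_right _ _) }
  obtain ⟨ρ, hρs, hρ⟩ := smooth_rho HF
  refine hρs.contDiffAt.congr_of_eventuallyEq ?_
  filter_upwards [Metric.ball_mem_nhds t0 hε] with t ht
  have hid := hΘid t ht
  have Ht := hsys t (hid ▸ hΘmem t)
  refine Ht.pressure (hρ t).1 ?_
  have := (hρ t).2
  simp only [ifsU_eq_opU, ψ, φ, hid] at this
  exact this

lemma main_thm {E : Type*} [NormedAddCommGroup E] [NormedSpace ℝ E] [FiniteDimensional ℝ E]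
    (U : Set E) (hU : IsOpen U)
    (r N : ℕ) (hr : 4 ≤ r) (lam : ℝ) (hlam : 0 < lam) (hlam1 : lam < 1)
    (T G : E → ℝ → ℝ)
    (hT : ExpandingFamily N (r + 1) lam U T)
    (hG : PotentialFamily N r U G) :
    ContDiffOn ℝ (min N (r - 3) - 1 : ℕ)
      (fun t => Real.exp (pressureExp (T t) (G t))) U := by
  have hprop : ProperSpace E := FiniteDimensional.proper ℝ E
  obtain ⟨hT1, hT2, hT3, hT4⟩ := hT
  obtain ⟨hG1, hG2, hG3⟩ := hG
  set K := min N (r - 3) with hK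
  have hKN : ((K : ℕ) : WithTop ℕ∞) ≤ (N : WithTop ℕ∞) := by
    exact_mod_cast (min_le_left _ _ : min N (r - 3) ≤ N)
  have hKr : K + 1 ≤ r := by omega
  have hKrc : ((K + 1 : ℕ) : WithTop ℕ∞) ≤ (r : WithTop ℕ∞) := by exact_mod_cast hKr
  have hKrc' : ((K + 1 : ℕ) : WithTop ℕ∞) ≤ ((r + 1 : ℕ) : WithTop ℕ∞) := by
    exact_mod_cast (by omega : K + 1 ≤ r + 1)
  have hper : ∀ t ∈ U, Function.Periodic (deriv (T t)) 1 := fun t ht => by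
    obtain ⟨d, hd⟩ := (hT1 t ht).2.1
    exact deriv_periodic_of_lift hd
  have hGper : ∀ t ∈ U, Function.Periodic (deriv (G t)) 1 := fun t ht =>
    deriv_periodic_of_lift (d := 0) (fun x => by rw [add_zero]; exact (hG1 t ht).2 x)
  have hTj : ContDiffOn ℝ K (fun p : E × ℝ => T p.1 p.2) (U ×ˢ univ) :=
    fam_joint hU K T (fun t ht => (hT2 t ht).of_le hKrc') hper (hT3.of_le hKN)
      (fun j h1 h2 => (hT4 j h1 (by omega)).of_le hKN)
  have hGC : ∀ t ∈ U, ContDiff ℝ (K + 1 : ℕ) (G t) := fun t ht => (hG2 t ht).of_le hKrc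
  have hG0 : ContDiffOn ℝ K (fun t => G t 0) U := by
    have h1 := (BoundedContinuousFunction.evalCLM ℝ (β := ℝ) (0 : ℝ)).contDiff.comp_contDiffOn
      ((hG3 0 (by omega)).of_le hKN)
    refine h1.congr fun t ht => ?_
    simp only [iteratedDeriv_zero, Function.comp, BoundedContinuousFunction.evalCLM_apply]
    exact (toBCF_apply (hG2 t ht).continuous (fun x => (hG1 t ht).2 x) 0).symm
  have hGj : ContDiffOn ℝ K (fun p : E × ℝ => G p.1 p.2) (U ×ˢ univ) :=
    fam_joint hU K G hGC hGper hG0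
      (fun j h1 h2 => (hG3 j (by omega)).of_le hKN)
  have hSex : ∀ t, ∃ S : ℝ → ℝ, t ∈ U → (∀ y, T t (S y) = y) ∧ (∀ x, S (T t x) = x) ∧
      ∀ y y', |S y - S y'| ≤ lam * |y - y'| := fun t => by
    by_cases ht : t ∈ U
    · obtain ⟨S, hS⟩ := inv_exists hlam (hT1 t ht)
      exact ⟨S, fun _ => hS⟩
    · exact ⟨0, fun h => absurd h ht⟩
  choose S hS using hSex
  have hSj : ContDiffOn ℝ K (fun p : E × ℝ => S p.1 p.2) (U ×ˢ univ) :=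
    inv_smooth hU K T S lam hTj (fun t ht => (hS t ht).1) (fun t ht => (hS t ht).2.1)
      (fun t ht => (hS t ht).2.2) (fun t ht x h => by
        have := (hT1 t ht).2.2 x
        rw [h, abs_zero] at this
        exact absurd this (not_le.2 (inv_pos.2 hlam)))
  have hslice : ∀ (F : E → ℝ → ℝ), ContDiffOn ℝ K (fun p : E × ℝ => F p.1 p.2) (U ×ˢ univ) →
      ∀ x, ContinuousOn (fun t => F t x) U := fun F hF x =>
    hF.continuousOn.comp (f := fun t : E => ((t, x) : E × ℝ)) (by fun_prop)
      (fun t ht => ⟨ht, mem_univ _⟩)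
  intro t0 ht0
  refine ContDiffAt.contDiffWithinAt ?_
  obtain ⟨d, hd⟩ := (hT1 t0 ht0).2.1
  have hcont : ContinuousOn (fun t => T t 1 - T t 0) U := (hslice T hTj 1).sub (hslice T hTj 0)
  have hat : ContinuousAt (fun t => T t 1 - T t 0) t0 := hcont.continuousAt (hU.mem_nhds ht0)
  have hev : ∀ᶠ t in 𝓝 t0, t ∈ U ∧ IsCircleLift (T t) d := by
    have h0 : T t0 1 - T t0 0 = d := by
      have := hd 0
      rw [zero_add] at this; rw [this]; ring
    filter_upwards [hU.mem_nhds ht0, hat.eventually (Metric.ball_mem_nhds _ one_pos)] with t ht h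
    refine ⟨ht, ?_⟩
    obtain ⟨d', hd'⟩ := (hT1 t ht).2.1
    have h1 : T t 1 - T t 0 = d' := by
      have := hd' 0
      rw [zero_add] at this; rw [this]; ring
    rw [h1, h0, Real.dist_eq] at h
    have h2 : |d' - d| < 1 := by exact_mod_cast h
    have h3 : d' = d := by
      have := Int.abs_lt_one_iff.1 h2
      omega
    exact h3 ▸ hd'
  obtain ⟨δ, hδ, hδU⟩ := Metric.eventually_nhds_iff_ball.1 hev
  have hsub : ∀ t ∈ Metric.closedBall t0 (2 * (δ / 4)), t ∈ U ∧ IsCircleLift (T t) d := fun t ht =>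
    hδU t (Metric.mem_ball.2 ((Metric.mem_closedBall.1 ht).trans_lt (by linarith)))
  have hcomp : IsCompact (Metric.closedBall t0 (2 * (δ / 4))) := isCompact_closedBall _ _
  obtain ⟨M0, hM0⟩ := hcomp.exists_bound_of_continuousOn
    ((hslice S hSj 0).mono fun t ht => (hsub t ht).1)
  obtain ⟨L, hL⟩ := hcomp.exists_bound_of_continuousOn
    ((hG3 1 (by omega)).continuousOn.mono fun t ht => (hsub t ht).1)
  have hmem0 : t0 ∈ Metric.closedBall t0 (2 * (δ / 4)) :=
    Metric.mem_closedBall_self (by linarith)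
  have hd0 : d ≠ 0 := by
    rintro rfl
    have h1 := hd 0
    rw [Int.cast_zero, add_zero] at h1
    have h2 := congrArg (S t0) h1
    rw [(hS t0 ht0).2.1, (hS t0 ht0).2.1] at h2
    norm_num at h2
  refine local_main K T S G lam L M0 d t0 (δ / 4) (by linarith) hSj hGj
    (fun t ht => (hsub t ht).1) (fun t ht => ?_) (fun t ht => hM0 t ht)
  have htU := (hsub t ht).1
  refine ⟨hlam.le, hlam1, (norm_nonneg _).trans (hL t0 hmem0), hd0, (hS t htU).1, (hS t htU).2.1,
    (hS t htU).2.2, (hsub t ht).2, fun x x' => ?_, (hG1 t htU).2⟩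
  have e1 := fam_rel (hGC t htU) (hGper t htU) 0 (by omega) x
  have e2 := fam_rel (hGC t htU) (hGper t htU) 0 (by omega) x'
  simp only [iteratedDeriv_zero, zero_add] at e1 e2
  have e3 : G t x - G t x' = (IntC x - IntC x') (toBCF (iteratedDeriv 1 (G t))) := by
    rw [e1, e2, sub_apply]; ring
  rw [e3, ← Real.norm_eq_abs]
  refine (ContinuousLinearMap.le_opNorm _ _).trans ?_
  rw [mul_comm]
  exact mul_le_mul (hL t ht) (IntC_sub_le x x') (norm_nonneg _)
    ((norm_nonneg _).trans (hL t ht))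

/-- **Statement 19** (Lemma `rmoinsq`).  If `r ≥ 4`, the map `t ↦ e^{P_t(g_t)}` is
`C^k` on `U`, where `k = min (N − 1) (r − 4)`. -/
theorem statement19
    (D : ℕ) (U : Set (Fin D → ℝ)) (hU : IsOpen U)
    (r N : ℕ) (hr : 4 ≤ r) (lam : ℝ) (hlam : 0 < lam) (hlam1 : lam < 1)
    (T G : (Fin D → ℝ) → ℝ → ℝ)
    (hT : ExpandingFamily N (r + 1) lam U T)
    (hG : PotentialFamily N r U G) :
    ContDiffOn ℝ (min (N - 1) (r - 4))
      (fun t => Real.exp (pressureExp (T t) (G t))) U := by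
  have h1 : ((N : WithTop ℕ∞) - 1) = ((N - 1 : ℕ) : WithTop ℕ∞) := by norm_cast
  have h2 : ((r : WithTop ℕ∞) - 4) = ((r - 4 : ℕ) : WithTop ℕ∞) := by norm_cast
  have h3 : min ((N : WithTop ℕ∞) - 1) ((r : WithTop ℕ∞) - 4) =
      ((min N (r - 3) - 1 : ℕ) : WithTop ℕ∞) := by
    rw [h1, h2, show min N (r - 3) - 1 = min (N - 1) (r - 4) by omega]
    norm_cast
  rw [h3]
  exact main_thm U hU r N hr lam hlam hlam1 T G hT hG
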